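/- Let f be a multicritical circle map with irrational rotation number and chosen critical point c_0; write Δ_k = f^{q_n + k q_{n+1}}(I_{n+1}(c_0)) for 0 ≤ k < a_{n+1}, let the critical times 0 ≤ k_1 < ⋯ < k_r < a_{n+1} (with k_0 = 0) be those k for which Δ_k contains a critical point of f^{q_{n+1}}, and for 0 ≤ i < r let G_i = ⋃_{k=k_i+1}^{k_{i+1}−1} Δ_k be the i-th bridge, with G_r = ⋃_{k=k_r+1}^{a_{n+1}−1} Δ_k. Then each non-empty bridge G_i is comparable to I_n(c_0): there is a constant K > 1 depending only on f such that K^{−1}|I_n(c_0)| ≤ |G_i| ≤ K|I_n(c_0)|. -/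

import Mathlib

open Set Filter MeasureTheory

noncomputable section

/-- The Schwarzian derivative `Sf = (f''/f')' - (1/2) (f''/f')^2`. -/
def schwarzianDeriv (f : ℝ → ℝ) (x : ℝ) : ℝ :=
  deriv (fun y => deriv (deriv f) y / deriv f y) x
    - (1 / 2) * (deriv (deriv f) x / deriv f x) ^ 2

/-- A multicritical circle map, described through its lift `F : ℝ → ℝ` to the real line.
It is an orientation-preserving `C^3` circle homeomorphism with finitely many critical
points `c 0, …, c (N-1)`, each of non-flat power-law type: near `c i` the derivative is
pinched between two multiples of `|x - c i| ^ (s i - 1)` with `s i > 1`, the Schwarzian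
derivative is negative on a punctured neighborhood of each critical point, and
`log (F')` has bounded variation (bounded by `v`) off the critical neighborhoods. -/
structure MCM where
  /-- the lift of the circle map -/
  F : ℝ → ℝ
  smooth : ContDiff ℝ 3 F
  mono : StrictMono F
  deg1 : ∀ x, F (x + 1) = F x + 1
  /-- number of critical points -/
  N : ℕ
  N_pos : 0 < N
  /-- the critical points (one representative in `[0,1)` for each) -/
  c : Fin N → ℝ
  c_mem : ∀ i, c i ∈ Set.Ico (0 : ℝ) 1
  c_inj : Function.Injective c
  isCrit : ∀ i, deriv F (c i) = 0
  critOnly : ∀ x, deriv F x = 0 → ∃ (i : Fin N) (k : ℤ), x = c i + (k : ℝ)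
  /-- neighborhoods of the critical points -/
  W : Fin N → Set ℝ
  W_open : ∀ i, IsOpen (W i)
  c_mem_W : ∀ i, c i ∈ W i
  /-- the criticalities (power-law exponents) -/
  s : Fin N → ℝ
  s_gt_one : ∀ i, 1 < s i
  al : Fin N → ℝ
  be : Fin N → ℝ
  al_pos : ∀ i, 0 < al i
  al_lt_be : ∀ i, al i < be i
  powerLaw : ∀ i, ∀ x ∈ W i, x ≠ c i →
    al i * |x - c i| ^ (s i - 1) < deriv F x ∧
      deriv F x < be i * |x - c i| ^ (s i - 1)
  negSchwarzian : ∀ i, ∀ x ∈ W i, x ≠ c i → schwarzianDeriv F x < 0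
  /-- bound for the variation of `log DF` off the critical neighborhoods -/
  v : ℝ
  v_pos : 0 < v
  logDF_var : eVariationOn (fun x => Real.log (deriv F x))
      (Set.Icc 0 1 \ ⋃ (i) (k : ℤ), (fun y => y + (k : ℝ)) '' W i) ≤ ENNReal.ofReal v

/-- The circle map with lift `F` has rotation number `ρ`. -/
def HasRotationNumber (F : ℝ → ℝ) (ρ : ℝ) : Prop :=
  Tendsto (fun n : ℕ => F^[n] 0 / n) atTop (nhds ρ)

/-- The Gauss map `x ↦ {1/x}`. -/
def gaussMap (x : ℝ) : ℝ := Int.fract x⁻¹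

/-- Partial quotients `a_n` of the continued fraction expansion of `ρ ∈ (0,1)`. -/
def cfDigit (ρ : ℝ) (n : ℕ) : ℕ := (⌊(gaussMap^[n] ρ)⁻¹⌋).toNat

/-- Return times: the denominators `q_n` of the convergents of `ρ`,
`q_0 = 1`, `q_1 = a_0`, `q_{n+1} = a_n q_n + q_{n-1}`. -/
def qDen (ρ : ℝ) : ℕ → ℕ
  | 0 => 1
  | 1 => cfDigit ρ 0
  | n + 2 => cfDigit ρ (n + 1) * qDen ρ (n + 1) + qDen ρ n

/-- Numerators `p_n` of the convergents of `ρ`: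
`p_0 = 0`, `p_1 = 1`, `p_{n+1} = a_n p_n + p_{n-1}`. -/
def pNum (ρ : ℝ) : ℕ → ℕ
  | 0 => 0
  | 1 => 1
  | n + 2 => cfDigit ρ (n + 1) * pNum ρ (n + 1) + pNum ρ n

/-- The lift of the atom `I_ℓ^j(x) = f^j(I_ℓ(x))`, where `I_ℓ(x)` is the interval with
endpoints `x` and `f^{q_ℓ}(x)`; the lift of `f^{q_ℓ}(x)` adjacent to `x` is
`F^[q_ℓ] x - p_ℓ`. -/
def atomSet (F : ℝ → ℝ) (ρ x : ℝ) (ℓ j : ℕ) : Set ℝ :=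
  Set.uIcc (F^[j] x) (F^[j + qDen ρ ℓ] x - (pNum ρ ℓ : ℝ))

/-- The length of the atom `I_ℓ^j(x)`. -/
def atomLen (F : ℝ → ℝ) (ρ x : ℝ) (ℓ j : ℕ) : ℝ :=
  |F^[j + qDen ρ ℓ] x - (pNum ρ ℓ : ℝ) - F^[j] x|

/-- The two endpoints (as lifts) of the atom `I_ℓ^j(x)`. -/
def atomEnds (F : ℝ → ℝ) (ρ x : ℝ) (ℓ j : ℕ) : Set ℝ :=
  {F^[j] x, F^[j + qDen ρ ℓ] x - (pNum ρ ℓ : ℝ)}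

/-- `(ℓ, j)` indexes an atom of the `n`-th dynamical partition
`P_n(x) = {I_n^i(x) : i < q_{n+1}} ∪ {I_{n+1}^j(x) : j < q_n}`. -/
def IsAtomIdx (ρ : ℝ) (n ℓ j : ℕ) : Prop :=
  (ℓ = n ∧ j < qDen ρ (n + 1)) ∨ (ℓ = n + 1 ∧ j < qDen ρ n)

/-- Two distinct atoms are adjacent when they share an endpoint on the circle,
i.e. when some endpoints of their lifts differ by an integer. -/
def AdjacentAtoms (F : ℝ → ℝ) (ρ x : ℝ) (ℓ₁ j₁ ℓ₂ j₂ : ℕ) : Prop :=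
  (ℓ₁, j₁) ≠ (ℓ₂, j₂) ∧
    ∃ u ∈ atomEnds F ρ x ℓ₁ j₁, ∃ w ∈ atomEnds F ρ x ℓ₂ j₂, ∃ k : ℤ, w = u + (k : ℝ)

/-- `k` is a *critical time* at level `n`: `k < a_{n+1}` and the atom
`Δ_k = f^{q_n + k q_{n+1}}(I_{n+1}(c₀))` contains a critical point of `f^{q_{n+1}}`. -/
def CritTime (f : MCM) (ρ : ℝ) (i₀ : Fin f.N) (n k : ℕ) : Prop :=
  k < cfDigit ρ (n + 1) ∧
    ∃ x ∈ atomSet f.F ρ (f.c i₀) (n + 1) (qDen ρ n + k * qDen ρ (n + 1)),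
      deriv (f.F^[qDen ρ (n + 1)]) x = 0

/-- `(i, j)` bounds a bridge: `i` is a critical time (or the conventional time `k₀ = 0`),
there is no critical time strictly between `i` and `j`, and `j` is either the next
critical time or the final index `a_{n+1}`. The corresponding bridge is
`G = ⋃_{k=i+1}^{j-1} Δ_k`. -/
def IsBridgePair (f : MCM) (ρ : ℝ) (i₀ : Fin f.N) (n i j : ℕ) : Prop :=
  (CritTime f ρ i₀ n i ∨ i = 0) ∧ i < j ∧
    (∀ k, i < k → k < j → ¬CritTime f ρ i₀ n k) ∧
    (CritTime f ρ i₀ n j ∨ j = cfDigit ρ (n + 1))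

/-- The length of the union `⋃_{k=lo}^{hi-1} Δ_k` of consecutive atoms
`Δ_k = f^{q_n + k q_{n+1}}(I_{n+1}(c₀))`. -/
def bridgeLen (f : MCM) (ρ : ℝ) (i₀ : Fin f.N) (n lo hi : ℕ) : ℝ :=
  ∑ k ∈ Finset.Ico lo hi, atomLen f.F ρ (f.c i₀) (n + 1) (qDen ρ n + k * qDen ρ (n + 1))

/-!
Let `s` and `g` be the lifts of the returns `f^{q_n}` and `f^{q_{n+1}}`, which move points in
opposite directions. A map with negative Schwarzian derivative does not increase cross-ratios, the
power law bounds the increase on an interval containing a critical point, and `log Df` is Lipschitz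
elsewhere. The first `q_{n+1}` images of an interval covered by four fundamental intervals of `s`
have bounded total length and meet each critical point a bounded number of times, so `f^{q_{n+1}}`
increases its cross-ratios at most by a bounded factor.

The shortest fundamental interval `[z, s z]` is no longer than its neighbours, and every orbit
visits it within `O(q_{n+1})` iterates; pulling this back makes all pairs of adjacent fundamental
intervals comparable. At a critical point `c` the power law turns the cross-ratio inequality into
`|s c - c| ≤ C |c - g c|`: otherwise four points near `c`, compressed by the power law, would have
too large a cross-ratio after the return. This pulls back to every point whose orbit of length
`q_{n+1}` meets a critical point. Hence the atom `Δ_{i+1}` following a critical spot `Δ_i`, or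
following `Δ_0`, alone is already comparable to `I_n(c₀)`, and it is part of the bridge.
-/

/-! ### Cross-ratios and closest returns -/

/-- The cross-ratio of four points, normalised as the product of the lengths of the outer intervals
`[u, v]`, `[w, t]` over that of the overlapping intervals `[u, w]`, `[v, t]`. -/
def crossRatio (u v w t : ℝ) : ℝ := (v - u) * (t - w) / ((w - u) * (t - v))

section CrossRatio

variable {u v w t : ℝ}

theorem crossRatio_pos (huv : u < v) (hvw : v < w) (hwt : w < t) : 0 < crossRatio u v w t := by
  unfold crossRatio
  apply div_pos <;> apply mul_pos <;> linarith

theorem crossRatio_add_const (u v w t a : ℝ) :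
    crossRatio (u + a) (v + a) (w + a) (t + a) = crossRatio u v w t := by
  simp only [crossRatio, add_sub_add_right_eq_sub]

theorem crossRatio_neg (u v w t : ℝ) : crossRatio (-t) (-w) (-v) (-u) = crossRatio u v w t := by
  simp only [crossRatio, neg_sub_neg]
  ring

theorem crossRatio_le_left (huv : u < v) (hvw : v < w) (hwt : w < t) :
    crossRatio u v w t ≤ (v - u) / (w - u) := by
  rw [crossRatio, mul_div_mul_comm]
  refine mul_le_of_le_one_right (div_nonneg ?_ ?_) (div_le_one_of_le₀ ?_ ?_) <;> linarith

theorem crossRatio_le_right (huv : u < v) (hvw : v < w) (hwt : w < t) :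
    crossRatio u v w t ≤ (t - w) / (t - v) := by
  rw [crossRatio, mul_div_mul_comm]
  refine mul_le_of_le_one_left (div_nonneg ?_ ?_) (div_le_one_of_le₀ ?_ ?_) <;> linarith

theorem inv_mul_inv_le_crossRatio {a b : ℝ} (huv : u < v) (hvw : v < w) (hwt : w < t)
    (ha : 0 < a) (hb : 0 < b) (hleft : w - u ≤ a * (v - u)) (hright : t - v ≤ b * (t - w)) :
    a⁻¹ * b⁻¹ ≤ crossRatio u v w t := by
  rw [crossRatio, mul_div_mul_comm]
  refine mul_le_mul ?_ ?_ (inv_pos.2 hb).le (div_nonneg ?_ ?_)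
  · rwa [le_div_iff₀ (by linarith), inv_mul_le_iff₀ ha]
  · rwa [le_div_iff₀ (by linarith), inv_mul_le_iff₀ hb]
  all_goals linarith

end CrossRatio

/-- Some integer translate of a point of `crit` lies in `[u, t]`. -/
def MeetsCrit (crit : Finset ℝ) (u t : ℝ) : Prop :=
  ∃ c ∈ crit, ∃ a : ℤ, (c + a : ℝ) ∈ Icc u t

open Classical in
/-- The topological and metric information on a multicritical circle map which the real bounds
use: a lift `F`, a monotone semiconjugacy `h` to the translation by `rho`, representatives `crit`
of the critical points, the cross-ratio inequality and the power law at the critical points.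
Unlike `MCM`, this package is invariant under the reflection `x ↦ -x`. -/
structure CriticalLift where
  F : CircleDeg1Lift
  continuous_F : Continuous F
  strictMono_F : StrictMono F
  h : CircleDeg1Lift
  rho : ℝ
  h_F : ∀ x, h (F x) = h x + rho
  crit : Finset ℝ
  distConst : ℝ
  distConst_nonneg : 0 ≤ distConst
  crossRatio_le : ∀ u v w t, u < v → v < w → w < t → t - u ≤ 4 →
    crossRatio (F u) (F v) (F w) (F t) ≤
      Real.exp (distConst * ((t - u) + if MeetsCrit crit u t then 1 else 0)) * crossRatio u v w t
  powerLaw : ∀ c ∈ crit, ∃ s al be : ℝ, 1 < s ∧ 0 < al ∧ 0 < be ∧ ∀ x, |x - c| ≤ 1 →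
    al * |x - c| ^ s ≤ |F x - F c| ∧ |F x - F c| ≤ be * |x - c| ^ s

/-- `q` is a closest return time of the rotation by `ρ`, with displacement `q ρ - p`, and `q'` is
the next one; `cover` says that `2 q' + 1` points of an orbit are `|q ρ - p|`-dense. -/
structure ClosestReturn (ρ : ℝ) (q : ℕ) (p : ℤ) (q' : ℕ) : Prop where
  pos : 0 < q
  le : q ≤ q'
  abs_pos : 0 < |q * ρ - p|
  abs_lt_one : |q * ρ - p| < 1
  best : ∀ (d : ℕ) (a : ℤ), 0 < d → d < q' → |q * ρ - p| < |d * ρ - a| ∨ (d = q ∧ a = p)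
  cover : ∀ t : ℝ, ∃ (k : ℕ) (a : ℤ), k ≤ 2 * q' ∧ k * ρ - a ∈ Icc t (t + |q * ρ - p|)

namespace ClosestReturn

variable {ρ : ℝ} {q q' : ℕ} {p : ℤ}

theorem next_pos (G : ClosestReturn ρ q p q') : 0 < q' := G.pos.trans_le G.le

theorem lt_one (G : ClosestReturn ρ q p q') : q * ρ - p < 1 := (le_abs_self _).trans_lt G.abs_lt_one

end ClosestReturn

namespace CriticalLift

variable (S : CriticalLift)

/-- The lift `x ↦ F^q x - p` of the `q`-th iterate of the circle map. -/
def ret (q : ℕ) (p : ℤ) : CircleDeg1Lift :=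
  CircleDeg1Lift.translate (Multiplicative.ofAdd (-(p : ℝ))) * S.F ^ q

theorem ret_apply (q : ℕ) (p : ℤ) (x : ℝ) : S.ret q p x = S.F^[q] x - p := by
  rw [ret, CircleDeg1Lift.mul_apply, CircleDeg1Lift.translate_apply, CircleDeg1Lift.coe_pow,
    neg_add_eq_sub]

theorem ret_ret (q q' : ℕ) (p p' : ℤ) (x : ℝ) :
    S.ret q p (S.ret q' p' x) = S.ret (q + q') (p + p') x := by
  simp only [ret_apply, ← CircleDeg1Lift.coe_pow, CircleDeg1Lift.map_sub_int, pow_add,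
    CircleDeg1Lift.mul_apply]
  push_cast
  ring

theorem ret_comm (q q' : ℕ) (p p' : ℤ) (x : ℝ) :
    S.ret q p (S.ret q' p' x) = S.ret q' p' (S.ret q p x) := by
  rw [ret_ret, ret_ret, add_comm q, add_comm p]

theorem ret_iterate (q : ℕ) (p : ℤ) (j : ℕ) (x : ℝ) :
    (S.ret q p)^[j] x = S.ret (j * q) (j * p) x := by
  induction j with
  | zero => simp [ret_apply]
  | succ j ih =>
    rw [Function.iterate_succ_apply', ih, ret_ret, add_comm q, add_comm p]
    push_cast
    ring_nf

theorem strictMono_ret (q : ℕ) (p : ℤ) : StrictMono (S.ret q p) := fun x y hxy => by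
  simpa only [ret_apply] using sub_lt_sub_right (S.strictMono_F.iterate q hxy) _

theorem continuous_ret (q : ℕ) (p : ℤ) : Continuous (S.ret q p) := by
  rw [funext (S.ret_apply q p)]
  exact (S.continuous_F.iterate q).sub continuous_const

theorem surjective_ret (q : ℕ) (p : ℤ) : Function.Surjective (S.ret q p) :=
  (S.ret q p).continuous_iff_surjective.1 (S.continuous_ret q p)

theorem h_ret (q : ℕ) (p : ℤ) (x : ℝ) : S.h (S.ret q p x) = S.h x + (q * S.rho - p) := by
  have h_iterate : S.h (S.F^[q] x) = S.h x + q * S.rho := by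
    induction q with
    | zero => simp
    | succ q ih =>
      rw [Function.iterate_succ_apply', S.h_F, ih]
      push_cast
      ring
  rw [ret_apply, CircleDeg1Lift.map_sub_int, h_iterate]
  ring

theorem lt_of_h_lt {x y : ℝ} (hxy : S.h x < S.h y) : x < y := S.h.monotone.reflect_lt hxy

theorem lt_ret {q : ℕ} {p : ℤ} (hθ : 0 < q * S.rho - p) (x : ℝ) : x < S.ret q p x :=
  S.lt_of_h_lt (by rw [h_ret]; linarith)

theorem ret_lt {q : ℕ} {p : ℤ} (hθ : q * S.rho - p < 0) (x : ℝ) : S.ret q p x < x :=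
  S.lt_of_h_lt (by rw [h_ret]; linarith)

theorem ret_lt_add_one {q : ℕ} {p : ℤ} (hθ : q * S.rho - p < 1) (x : ℝ) :
    S.ret q p x < x + 1 :=
  S.lt_of_h_lt (by rw [h_ret, S.h.map_add_one]; linarith)

variable {S} {q q' : ℕ} {p : ℤ}

theorem eq_and_eq_of_mem_Ico (G : ClosestReturn S.rho q p q') (hθ : 0 < q * S.rho - p)
    {x y : ℝ} {i i' : ℕ} {a a' : ℤ} (hi : i < q') (hi' : i' < q')
    (hx : x ∈ Ico (S.ret i a y) (S.ret i a (S.ret q p y)))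
    (hx' : x ∈ Ico (S.ret i' a' y) (S.ret i' a' (S.ret q p y))) : i = i' ∧ a = a' := by
  wlog hle : i' ≤ i generalizing i i' a a'
  · exact (this hi' hi hx' hx (not_le.1 hle).le).imp Eq.symm Eq.symm
  have hlt := hx.1.trans_lt hx'.2
  have hle₁ := S.h.monotone hlt.le
  have hle₂ := S.h.monotone (hx'.1.trans hx.2.le)
  simp only [h_ret] at hle₁ hle₂
  obtain ⟨d, rfl⟩ := Nat.exists_eq_add_of_le' hle
  have hclose : |d * S.rho - (a - a' : ℤ)| ≤ |q * S.rho - p| := by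
    push_cast at hle₁ hle₂ ⊢
    rw [abs_of_pos hθ, abs_le]
    constructor <;> linarith
  rcases Nat.eq_zero_or_pos d with rfl | hd
  · refine ⟨zero_add _, sub_eq_zero.1 (Int.abs_lt_one_iff.1 ?_)⟩
    have := hclose.trans_lt G.abs_lt_one
    rw [Nat.cast_zero, zero_mul, zero_sub, abs_neg] at this
    exact_mod_cast this
  · rcases G.best d (a - a') hd (by omega) with hfar | ⟨rfl, rfl⟩
    · exact absurd hclose hfar.not_ge
    · rw [ret_ret, add_comm i', add_sub_cancel] at hlt
      exact absurd hlt (lt_irrefl _)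

theorem sum_orbit_le_one (G : ClosestReturn S.rho q p q') (hθ : 0 < q * S.rho - p) (y : ℝ) :
    ∑ i ∈ Finset.range q', (S.ret i 0 (S.ret q p y) - S.ret i 0 y) ≤ 1 := by
  set J : ℕ → Set ℝ := fun i => Ico (S.ret i 0 y) (S.ret i 0 (S.ret q p y))
  have hvol : volume (⋃ i ∈ Finset.range q', J i) =
      ENNReal.ofReal (∑ i ∈ Finset.range q', (S.ret i 0 (S.ret q p y) - S.ret i 0 y)) := by
    rw [measure_biUnion_finset, ENNReal.ofReal_sum_of_nonneg]
    · simp only [J, Real.volume_Ico]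
    · exact fun i _ => sub_nonneg.2 (S.strictMono_ret i 0 (S.lt_ret hθ y)).le
    · refine fun i hi j hj hij => Set.disjoint_left.2 fun x hx hx' => hij ?_
      exact (eq_and_eq_of_mem_Ico G hθ (Finset.mem_range.1 hi) (Finset.mem_range.1 hj) hx hx').1
    · exact fun i _ => measurableSet_Ico
  by_contra! hlt
  obtain ⟨x, hx, x', hx', ⟨g, m, rfl⟩, hg, hxx'⟩ :=
    (isAddFundamentalDomain_Ioc one_pos 0).exists_ne_zero_vadd_eq
      (Finset.measurableSet_biUnion (Finset.range q') (f := J)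
        fun i _ => measurableSet_Ico).nullMeasurableSet
      (by simpa only [hvol, Real.volume_Ioc, add_sub_cancel_left] using
        (ENNReal.ofReal_lt_ofReal_iff (one_pos.trans hlt)).2 hlt)
  simp only [mem_iUnion, Finset.mem_range, J] at hx hx'
  obtain ⟨i, hi, hxi⟩ := hx
  obtain ⟨j, hj, hxj⟩ := hx'
  have hxm : x + m = x' := by rw [← hxx', AddSubgroup.vadd_def, vadd_eq_add, add_comm]; simp
  have hxj' : x ∈ Ico (S.ret j m y) (S.ret j m (S.ret q p y)) := by
    simp only [ret_apply _ j, Int.cast_zero, mem_Ico] at hxj ⊢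
    constructor <;> linarith [hxj.1, hxj.2]
  have hm := (eq_and_eq_of_mem_Ico G hθ hi hj hxi hxj').2
  exact hg (by simp [← hm])

end CriticalLift

/-! ### Distortion of cross-ratios along returns -/

theorem exists_forall_sub_le (f : CircleDeg1Lift) (hf : Continuous f) :
    ∃ z, ∀ x, f z - z ≤ f x - x := by
  obtain ⟨z, -, hz⟩ := isCompact_Icc.exists_isMinOn (nonempty_Icc.2 (zero_le_one (α := ℝ)))
    (hf.sub continuous_id).continuousOn
  refine ⟨z, fun x => ?_⟩
  rw [← f.map_fract_sub_fract_eq x]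
  exact hz ⟨Int.fract_nonneg x, (Int.fract_lt_one x).le⟩

namespace CriticalLift

variable {S : CriticalLift} {q q' : ℕ} {p : ℤ} {u v w t : ℝ}

open Classical in
theorem crossRatio_ret_le_exp_sum (k : ℕ) (huv : u < v) (hvw : v < w) (hwt : w < t)
    (hlen : ∀ i < k, S.ret i 0 t - S.ret i 0 u ≤ 4) :
    crossRatio (S.ret k 0 u) (S.ret k 0 v) (S.ret k 0 w) (S.ret k 0 t) ≤
      Real.exp (S.distConst * ∑ i ∈ Finset.range k, ((S.ret i 0 t - S.ret i 0 u) +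
        if MeetsCrit S.crit (S.ret i 0 u) (S.ret i 0 t) then 1 else 0)) * crossRatio u v w t := by
  induction k with
  | zero => simp [ret_apply]
  | succ k ih =>
    rw [Finset.sum_range_succ, mul_add, Real.exp_add]
    simp only [ret_apply, Function.iterate_succ_apply', Int.cast_zero, sub_zero] at hlen ih ⊢
    have hmono := S.strictMono_F.iterate k
    have hstep := S.crossRatio_le _ _ _ _ (hmono huv) (hmono hvw) (hmono hwt) (hlen k (by omega))
    have hprev := ih fun i hi => hlen i (by omega)
    refine hstep.trans ((mul_le_mul_of_nonneg_left hprev (Real.exp_pos _).le).trans_eq ?_)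
    ring

theorem sum_length_le_four (G : ClosestReturn S.rho q p q') (hθ : 0 < q * S.rho - p)
    (ht : t < (S.ret q p)^[4] u) :
    ∑ i ∈ Finset.range q', (S.ret i 0 t - S.ret i 0 u) ≤ 4 := by
  set s := S.ret q p
  calc ∑ i ∈ Finset.range q', (S.ret i 0 t - S.ret i 0 u)
      ≤ ∑ i ∈ Finset.range q', ∑ j ∈ Finset.range 4,
          (S.ret i 0 (s^[j + 1] u) - S.ret i 0 (s^[j] u)) := by
        refine Finset.sum_le_sum fun i _ => ?_
        rw [Finset.sum_range_sub (fun j => S.ret i 0 (s^[j] u))]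
        exact sub_le_sub_right ((S.ret i 0).monotone ht.le) _
    _ = ∑ j ∈ Finset.range 4, ∑ i ∈ Finset.range q',
          (S.ret i 0 (s (s^[j] u)) - S.ret i 0 (s^[j] u)) := by
        simp only [Function.iterate_succ_apply']
        exact Finset.sum_comm
    _ ≤ ∑ _j ∈ Finset.range 4, (1 : ℝ) := Finset.sum_le_sum fun j _ => sum_orbit_le_one G hθ _
    _ = 4 := by simp

open Classical in
theorem card_meetsCrit_le (G : ClosestReturn S.rho q p q') (hθ : 0 < q * S.rho - p)
    (ht : t < (S.ret q p)^[4] u) :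
    ((Finset.range q').filter fun i => MeetsCrit S.crit (S.ret i 0 u) (S.ret i 0 t)).card ≤
      4 * S.crit.card := by
  set s := S.ret q p
  have hvisit : ∀ i, MeetsCrit S.crit (S.ret i 0 u) (S.ret i 0 t) →
      ∃ jc ∈ Finset.range 4 ×ˢ S.crit, ∃ a : ℤ,
        jc.2 ∈ Ico (S.ret i a (s^[jc.1] u)) (S.ret i a (s (s^[jc.1] u))) := by
    rintro i ⟨c, hc, a, hca⟩
    have hmem := Ico_subset_biUnion_Ico 4 (fun j => S.ret i 0 (s^[j] u))
      ⟨hca.1, hca.2.trans_lt (S.strictMono_ret i 0 ht)⟩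
    simp only [mem_iUnion, Function.iterate_succ_apply'] at hmem
    obtain ⟨j, hj, hcj⟩ := hmem
    refine ⟨(j, c), Finset.mk_mem_product hj hc, a, ?_⟩
    simp only [ret_apply _ i, Int.cast_zero, mem_Ico] at hcj ⊢
    constructor <;> linarith [hcj.1, hcj.2]
  choose! visit hvisit_mem shift hshift using hvisit
  have hcard := Finset.card_le_card_of_injOn
    (s := (Finset.range q').filter fun i => MeetsCrit S.crit (S.ret i 0 u) (S.ret i 0 t)) visit
    (fun i hi => hvisit_mem i (Finset.mem_filter.1 hi).2) fun i hi i' hi' heq => by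
      obtain ⟨hi, hmeet⟩ := Finset.mem_filter.1 hi
      obtain ⟨hi', hmeet'⟩ := Finset.mem_filter.1 hi'
      exact (eq_and_eq_of_mem_Ico G hθ (Finset.mem_range.1 hi) (Finset.mem_range.1 hi')
        (hshift i hmeet) (heq ▸ hshift i' hmeet')).1
  simpa using hcard

/-- The distortion constant of cross-ratios along one return: an orbit of four adjacent
fundamental intervals has total length at most `4` and meets each critical point at most `4`
times. -/
def retDistConst (S : CriticalLift) : ℝ := Real.exp (S.distConst * (4 + 4 * S.crit.card))

theorem one_le_retDistConst (S : CriticalLift) : 1 ≤ S.retDistConst :=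
  Real.one_le_exp (mul_nonneg S.distConst_nonneg (by positivity))

theorem retDistConst_pow_pos (S : CriticalLift) (m : ℕ) : 0 < S.retDistConst ^ m :=
  pow_pos (Real.exp_pos _) m

theorem ret_iterate_four_lt (hθ : q * S.rho - p < 1) (u : ℝ) : (S.ret q p)^[4] u < u + 4 := by
  have hs := S.ret_lt_add_one hθ
  simp only [Function.iterate_succ_apply, Function.iterate_zero, id]
  linarith [hs u, hs (S.ret q p u), hs (S.ret q p (S.ret q p u)),
    hs (S.ret q p (S.ret q p (S.ret q p u)))]

theorem ret_iterate_comm (q k : ℕ) (p a : ℤ) (j : ℕ) (x : ℝ) :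
    S.ret k a ((S.ret q p)^[j] x) = (S.ret q p)^[j] (S.ret k a x) := by
  rw [ret_iterate, ret_comm, ret_iterate]

theorem crossRatio_ret_eq (k : ℕ) (a : ℤ) (u v w t : ℝ) :
    crossRatio (S.ret k a u) (S.ret k a v) (S.ret k a w) (S.ret k a t) =
      crossRatio (S.ret k 0 u) (S.ret k 0 v) (S.ret k 0 w) (S.ret k 0 t) := by
  simp only [ret_apply, Int.cast_zero, sub_zero]
  exact crossRatio_add_const _ _ _ _ (-(a : ℝ))

theorem crossRatio_ret_le_retDistConst (G : ClosestReturn S.rho q p q')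
    (hθ : 0 < q * S.rho - p) {k : ℕ} (hk : k ≤ q') (a : ℤ) (huv : u < v) (hvw : v < w) (hwt : w < t)
    (ht : t < (S.ret q p)^[4] u) :
    crossRatio (S.ret k a u) (S.ret k a v) (S.ret k a w) (S.ret k a t) ≤
      S.retDistConst * crossRatio u v w t := by
  classical
  have hut := huv.trans (hvw.trans hwt)
  rw [crossRatio_ret_eq]
  refine (crossRatio_ret_le_exp_sum k huv hvw hwt fun i _ => ?_).trans ?_
  · have hi := S.strictMono_ret i 0 ht
    rw [ret_iterate_comm] at hi
    linarith [S.ret_iterate_four_lt G.lt_one (S.ret i 0 u)]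
  · refine mul_le_mul_of_nonneg_right (Real.exp_le_exp.2 ?_) (crossRatio_pos huv hvw hwt).le
    refine mul_le_mul_of_nonneg_left ((Finset.sum_le_sum_of_subset_of_nonneg
      (Finset.range_subset_range.2 hk) fun i _ _ => ?_).trans ?_) S.distConst_nonneg
    · refine add_nonneg (sub_nonneg.2 (S.strictMono_ret i 0 hut).le) ?_
      split_ifs <;> norm_num
    · rw [Finset.sum_add_distrib, Finset.sum_boole]
      exact add_le_add (sum_length_le_four G hθ ht) (mod_cast card_meetsCrit_le G hθ ht)

theorem crossRatio_ret_le (G : ClosestReturn S.rho q p q') (hθ : 0 < q * S.rho - p) (m : ℕ) {k : ℕ}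
    (hk : k ≤ m * q') (a : ℤ) (huv : u < v) (hvw : v < w) (hwt : w < t)
    (ht : t < (S.ret q p)^[4] u) :
    crossRatio (S.ret k a u) (S.ret k a v) (S.ret k a w) (S.ret k a t) ≤
      S.retDistConst ^ m * crossRatio u v w t := by
  induction m generalizing k u v w t with
  | zero =>
    obtain rfl : k = 0 := by omega
    rw [crossRatio_ret_eq]
    simp [ret_apply]
  | succ m ih =>
    rcases le_total k q' with hk' | hk'
    · refine (crossRatio_ret_le_retDistConst G hθ hk' a huv hvw hwt ht).trans ?_
      exact mul_le_mul_of_nonneg_right (le_self_pow₀ S.one_le_retDistConst (by omega))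
        (crossRatio_pos huv hvw hwt).le
    · obtain ⟨d, rfl⟩ := Nat.exists_eq_add_of_le' hk'
      have hmono := S.strictMono_ret q' 0
      have hd := ih (k := d) (by rw [add_mul] at hk; omega) (hmono huv) (hmono hvw) (hmono hwt)
        (by rw [← ret_iterate_comm]; exact hmono ht)
      simp only [ret_ret, add_zero] at hd
      refine hd.trans ?_
      rw [pow_succ, mul_assoc]
      exact mul_le_mul_of_nonneg_left (crossRatio_ret_le_retDistConst G hθ le_rfl 0 huv hvw hwt ht)
        (S.retDistConst_pow_pos m).le

end CriticalLift

/-! ### Consecutive fundamental intervals are comparable -/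

section Interlacing

variable {x y : ℕ → ℝ} {b c : ℝ}

theorem interlaced_gap_le (hx : StrictMono x) (hyx : ∀ i, y (i + 1) ≤ x i)
    (hxy : ∀ i, x i ≤ y (i + 2)) (hb : 1 ≤ b) (hc : 1 ≤ c) (hright : y 4 - y 3 ≤ c * (y 5 - y 4))
    (hcr : crossRatio (x 1) (x 2) (x 3) (x 4) ≤ b * crossRatio (x 0) (x 1) (x 2) (x 3)) :
    y 4 - y 3 ≤ 4 * b * c * (x 3 - x 2) := by
  have hpos : 0 < x 3 - x 2 := sub_pos.2 (hx (by norm_num))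
  have hbc : 4 * b * (x 3 - x 2) ≤ 4 * b * c * (x 3 - x 2) :=
    mul_le_mul_of_nonneg_right (le_mul_of_one_le_right (by linarith) hc) hpos.le
  have hcover : y 4 - y 3 ≤ x 3 - x 1 := sub_le_sub (hyx 3) (hxy 1)
  rcases le_total (x 2 - x 1) (x 3 - x 2) with hX₁ | hX₁
  · nlinarith
  rcases le_total (x 4 - x 3) (x 3 - x 2) with hX₃ | hX₃
  · calc y 4 - y 3 ≤ c * (y 5 - y 4) := hright
      _ ≤ c * (2 * (x 3 - x 2)) :=
        mul_le_mul_of_nonneg_left (by linarith [hyx 4, hxy 2]) (by linarith)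
      _ ≤ 4 * b * c * (x 3 - x 2) := by nlinarith [mul_pos (one_pos.trans_le hc) hpos]
  · have hquarter := inv_mul_inv_le_crossRatio (hx (by norm_num)) (hx (by norm_num))
      (hx (by norm_num)) two_pos two_pos (u := x 1) (v := x 2) (w := x 3) (t := x 4)
      (by linarith) (by linarith)
    have hle := hquarter.trans (hcr.trans (mul_le_mul_of_nonneg_left
      (crossRatio_le_right (hx (by norm_num)) (hx (by norm_num)) (hx (by norm_num)))
      (by linarith)))
    rw [← mul_div_assoc, le_div_iff₀ (by linarith)] at hle
    linarith

theorem gaps_le_of_interlaced (hx : StrictMono x) (hy : Monotone y) (hyx : ∀ i, y (i + 1) ≤ x i)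
    (hxy : ∀ i, x i ≤ y (i + 2)) (hb : 1 ≤ b) (hc : 1 ≤ c)
    (hleft : ∀ i < 5, y (i + 2) - y (i + 1) ≤ c * (y (i + 1) - y i))
    (hright : ∀ i < 5, y (i + 2) - y (i + 1) ≤ c * (y (i + 3) - y (i + 2)))
    (hcr : crossRatio (x 1) (x 2) (x 3) (x 4) ≤ b * crossRatio (x 0) (x 1) (x 2) (x 3)) :
    x 2 - x 1 ≤ (c + c ^ 2) * (4 * b * c) * (x 3 - x 2) ∧
      x 4 - x 3 ≤ (c + c ^ 2) * (4 * b * c) * (x 3 - x 2) := by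
  have hgap := interlaced_gap_le hx hyx hxy hb hc (hright 2 (by norm_num)) hcr
  have hnn : 0 ≤ y 4 - y 3 := sub_nonneg.2 (hy (by norm_num))
  suffices x 2 - x 1 ≤ (c + c ^ 2) * (y 4 - y 3) ∧ x 4 - x 3 ≤ (c + c ^ 2) * (y 4 - y 3) by
    have hup := mul_le_mul_of_nonneg_left hgap (show 0 ≤ c + c ^ 2 by positivity)
    rw [← mul_assoc] at hup
    exact this.imp hup.trans' hup.trans'
  constructor
  · have hc₂ : y 4 - y 3 ≤ c ^ 2 * (y 4 - y 3) := le_mul_of_one_le_left hnn (one_le_pow₀ hc)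
    linarith [hright 1 (by norm_num), hyx 1, hxy 2]
  · nlinarith [hleft 3 (by norm_num), hleft 4 (by norm_num), hyx 3, hxy 4]

end Interlacing

namespace CriticalLift

variable {S : CriticalLift} {q q' : ℕ} {p : ℤ}

theorem gap_le_of_ret_eq_minimizer (G : ClosestReturn S.rho q p q') (hθ : 0 < q * S.rho - p)
    {z : ℝ} (hz : ∀ x, S.ret q p z - z ≤ S.ret q p x - x) {m k : ℕ} (hk : k ≤ m * q') {a : ℤ}
    {y : ℝ} (hy : S.ret k a (S.ret q p y) = z) :
    S.ret q p (S.ret q p y) - S.ret q p y ≤ 4 * S.retDistConst ^ m * (S.ret q p y - y) ∧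
      S.ret q p (S.ret q p y) - S.ret q p y ≤
        4 * S.retDistConst ^ m *
          (S.ret q p (S.ret q p (S.ret q p y)) - S.ret q p (S.ret q p y)) := by
  set s := S.ret q p
  have hlt : ∀ x, x < s x := S.lt_ret hθ
  have hmono := S.strictMono_ret k a
  have hmin : ∀ x, s (S.ret k a (s y)) - S.ret k a (s y) ≤ s x - x := hy ▸ hz
  have hquarter : 2⁻¹ * 2⁻¹ ≤ crossRatio (S.ret k a y) (S.ret k a (s y)) (S.ret k a (s (s y)))
      (S.ret k a (s (s (s y)))) := by
    have hcomm : ∀ x, S.ret k a (s x) = s (S.ret k a x) := S.ret_comm k q a p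
    refine inv_mul_inv_le_crossRatio (hmono (hlt _)) (hmono (hlt _)) (hmono (hlt _)) two_pos two_pos
      ?_ ?_
    · have := hmin (S.ret k a y)
      rw [← hcomm, ← hcomm] at this
      linarith
    · have := hmin (S.ret k a (s (s y)))
      rw [← hcomm, ← hcomm] at this
      linarith
  have hle := hquarter.trans (crossRatio_ret_le G hθ m hk a (hlt y) (hlt _) (hlt _) (hlt _))
  have hB := S.retDistConst_pow_pos m
  constructor
  · have hle := hle.trans (mul_le_mul_of_nonneg_left (crossRatio_le_left (hlt y) (hlt _) (hlt _))
      hB.le)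
    rw [← mul_div_assoc, le_div_iff₀ (by linarith [hlt y, hlt (s y)])] at hle
    linarith [hlt y]
  · have hle := hle.trans (mul_le_mul_of_nonneg_left (crossRatio_le_right (hlt y) (hlt _) (hlt _))
      hB.le)
    rw [← mul_div_assoc, le_div_iff₀ (by linarith [hlt (s y), hlt (s (s y))])] at hle
    linarith [hlt (s (s y))]

/- The density of orbits only controls `h`, and `h` need not be injective: the orbit may land just
outside `[z, s z)`, and one more or one less return then brings it in. -/
theorem exists_ret_mem_Ico (G : ClosestReturn S.rho q p q') (hθ : 0 < q * S.rho - p) (x z : ℝ) :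
    ∃ (k : ℕ) (a : ℤ), 7 * q ≤ k ∧ k ≤ 11 * q' ∧ S.ret k a x ∈ Ico z (S.ret q p z) := by
  obtain ⟨k, a, hk, hlow, hupp⟩ := G.cover (S.h z - S.h (S.ret (8 * q) 0 x))
  have hq := G.le
  rw [abs_of_pos hθ] at hupp
  have h8 : S.h (S.ret (k + 8 * q) a x) = S.h (S.ret (8 * q) 0 x) + (k * S.rho - a) := by
    rw [← h_ret, ret_ret, add_zero]
  have h9 : S.ret (k + 9 * q) (a + p) x = S.ret q p (S.ret (k + 8 * q) a x) := by
    rw [ret_ret]; ring_nf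
  have h7 : S.ret q p (S.ret (k + 7 * q) (a - p) x) = S.ret (k + 8 * q) a x := by
    rw [ret_ret]; ring_nf
  have hs := S.strictMono_ret q p
  rcases lt_or_ge (S.ret (k + 8 * q) a x) z with hlt | hge
  · refine ⟨k + 9 * q, a + p, by omega, by omega, S.lt_of_h_lt ?_ |>.le, h9 ▸ hs hlt⟩
    rw [h9, h_ret, h8]
    linarith
  rcases lt_or_ge (S.ret (k + 8 * q) a x) (S.ret q p z) with hlt | hge'
  · exact ⟨k + 8 * q, a, by omega, by omega, hge, hlt⟩
  · refine ⟨k + 7 * q, a - p, by omega, by omega, hs.le_iff_le.1 (h7 ▸ hge'), S.lt_of_h_lt ?_⟩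
    have := S.h_ret q p (S.ret (k + 7 * q) (a - p) x)
    rw [h7] at this
    rw [S.h_ret q p z]
    linarith

theorem exists_interlacing_chain (G : ClosestReturn S.rho q p q') (hθ : 0 < q * S.rho - p)
    (x : ℝ) :
    ∃ y, S.ret q p y ≤ x ∧ x < S.ret q p (S.ret q p y) ∧ ∀ i < 5,
      (S.ret q p)^[i + 2] y - (S.ret q p)^[i + 1] y ≤
          4 * S.retDistConst ^ 11 * ((S.ret q p)^[i + 1] y - (S.ret q p)^[i] y) ∧
        (S.ret q p)^[i + 2] y - (S.ret q p)^[i + 1] y ≤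
          4 * S.retDistConst ^ 11 * ((S.ret q p)^[i + 3] y - (S.ret q p)^[i + 2] y) := by
  obtain ⟨z, hz⟩ := exists_forall_sub_le _ (S.continuous_ret q p)
  obtain ⟨k, a, hk, hk', hzx, hxz⟩ := exists_ret_mem_Ico G hθ x z
  obtain ⟨y₁, rfl⟩ := S.surjective_ret k a z
  obtain ⟨y, rfl⟩ := S.surjective_ret q p y₁
  rw [S.ret_comm q k] at hxz
  have hmono := S.strictMono_ret k a
  refine ⟨y, hmono.le_iff_le.1 hzx, hmono.lt_iff_lt.1 hxz, fun i hi => ?_⟩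
  simp only [Function.iterate_succ_apply']
  have hiq : i * q ≤ k := by nlinarith
  refine gap_le_of_ret_eq_minimizer G hθ hz (k := k - i * q) (a := a - i * p) (by omega) ?_
  rw [← Function.iterate_succ_apply' (S.ret q p), Function.iterate_succ_apply, ret_iterate, ret_ret,
    Nat.sub_add_cancel hiq, sub_add_cancel]

theorem exists_ret_gap_le_of_pos (S : CriticalLift) :
    ∃ C : ℝ, 1 ≤ C ∧ ∀ (q : ℕ) (p : ℤ) (q' : ℕ), ClosestReturn S.rho q p q' →
      0 < q * S.rho - p → ∀ x,
      S.ret q p (S.ret q p x) - S.ret q p x ≤ C * (S.ret q p x - x) ∧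
        S.ret q p x - x ≤ C * (S.ret q p (S.ret q p x) - S.ret q p x) := by
  have hB := S.one_le_retDistConst
  set c := 4 * S.retDistConst ^ 11
  have hc : 1 ≤ c := by linarith [one_le_pow₀ hB (n := 11)]
  refine ⟨(c + c ^ 2) * (4 * S.retDistConst * c), one_le_mul_of_one_le_of_one_le
    (le_add_of_le_of_nonneg hc (by positivity)) (one_le_mul_of_one_le_of_one_le (by linarith) hc),
    fun q p q' G hθ => ?_⟩
  have hs := S.strictMono_ret q p
  have hgaps : ∀ x, (S.ret q p)^[2] x - (S.ret q p)^[1] x ≤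
        (c + c ^ 2) * (4 * S.retDistConst * c) * ((S.ret q p)^[3] x - (S.ret q p)^[2] x) ∧
      (S.ret q p)^[4] x - (S.ret q p)^[3] x ≤ (c + c ^ 2) * (4 * S.retDistConst * c) *
        ((S.ret q p)^[3] x - (S.ret q p)^[2] x) := fun x => by
    obtain ⟨y, hyx, hxy, hy⟩ := exists_interlacing_chain G hθ x
    have hx := hs.strictMono_iterate_of_lt_map (S.lt_ret hθ x)
    refine gaps_le_of_interlaced (x := fun i => (S.ret q p)^[i] x) (y := fun i => (S.ret q p)^[i] y)
      hx (hs.strictMono_iterate_of_lt_map (S.lt_ret hθ y)).monotone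
      (fun i => ?_) (fun i => ?_) hB hc (fun i hi => (hy i hi).1) (fun i hi => (hy i hi).2) ?_
    · exact hs.monotone.iterate i hyx
    · exact hs.monotone.iterate i hxy.le
    · simpa only [← Function.iterate_succ_apply'] using crossRatio_ret_le_retDistConst G hθ G.le p
        (hx zero_lt_one) (hx one_lt_two) (hx (by norm_num : 2 < 3)) (hx (by norm_num : 3 < 4))
  intro x
  obtain ⟨x', rfl⟩ := S.surjective_ret q p x
  obtain ⟨x'', rfl⟩ := S.surjective_ret q p x'
  exact ⟨(hgaps x'').2, (hgaps (S.ret q p x'')).1⟩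

end CriticalLift

/-! ### Returns of the critical points -/

namespace ClosestReturn

variable {ρ : ℝ} {q q' : ℕ} {p : ℤ}

theorem neg (G : ClosestReturn ρ q p q') : ClosestReturn (-ρ) q (-p) q' := by
  have abs_neg_displacement : ∀ (d : ℕ) (a : ℤ), |d * -ρ - (a : ℝ)| = |d * ρ - (-a : ℤ)| :=
    fun d a => by rw [← abs_neg]; push_cast; ring_nf
  have hθ : |q * -ρ - (-p : ℤ)| = |q * ρ - p| := by rw [abs_neg_displacement, neg_neg]
  refine ⟨G.pos, G.le, hθ ▸ G.abs_pos, hθ ▸ G.abs_lt_one, fun d a hd hd' => ?_, fun t => ?_⟩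
  · rw [hθ, abs_neg_displacement]
    exact (G.best d (-a) hd hd').imp_right (And.imp_right neg_eq_iff_eq_neg.1)
  · obtain ⟨k, a, hk, hlow, hupp⟩ := G.cover (-t - |q * ρ - p|)
    rw [hθ]
    refine ⟨k, -a, hk, ?_, ?_⟩ <;> push_cast <;> linarith

end ClosestReturn

/-- The conjugate `x ↦ -f (-x)` of a lift by the reflection of the line. -/
def reflect (f : CircleDeg1Lift) : CircleDeg1Lift where
  toFun x := -f (-x)
  monotone' _ _ hxy := neg_le_neg (f.monotone (neg_le_neg hxy))
  map_add_one' x := by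
    rw [neg_add, ← sub_eq_add_neg, ← Nat.cast_one, f.map_sub_nat]
    ring

theorem reflect_apply (f : CircleDeg1Lift) (x : ℝ) : reflect f x = -f (-x) := rfl

theorem meetsCrit_image_neg {crit : Finset ℝ} {u t : ℝ} :
    MeetsCrit (crit.image Neg.neg) u t ↔ MeetsCrit crit (-t) (-u) := by
  constructor
  · rintro ⟨c, hc, a, hlow, hupp⟩
    obtain ⟨c', hc', rfl⟩ := Finset.mem_image.1 hc
    exact ⟨c', hc', -a, by push_cast; linarith, by push_cast; linarith⟩
  · rintro ⟨c, hc, a, hlow, hupp⟩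
    exact ⟨-c, Finset.mem_image_of_mem _ hc, -a, by push_cast; linarith, by push_cast; linarith⟩

namespace CriticalLift

/-- The reflected system, which turns a return with negative displacement into one with positive
displacement. -/
def refl (S : CriticalLift) : CriticalLift where
  F := reflect S.F
  continuous_F := (S.continuous_F.comp continuous_neg).neg
  strictMono_F _ _ hxy := neg_lt_neg (S.strictMono_F (neg_lt_neg hxy))
  h := reflect S.h
  rho := -S.rho
  h_F x := by simp only [reflect_apply, neg_neg, S.h_F, neg_add]
  crit := S.crit.image Neg.neg
  distConst := S.distConst
  distConst_nonneg := S.distConst_nonneg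
  crossRatio_le u v w t huv hvw hwt htu := by
    have := S.crossRatio_le (-t) (-w) (-v) (-u) (by linarith) (by linarith) (by linarith)
      (by linarith)
    have hmeet := propext (meetsCrit_image_neg (crit := S.crit) (u := u) (t := t))
    rw [← hmeet] at this
    simpa only [reflect_apply, crossRatio_neg, neg_sub_neg] using this
  powerLaw c hc := by
    obtain ⟨c', hc', rfl⟩ := Finset.mem_image.1 hc
    obtain ⟨s, al, be, hs, hal, hbe, hpow⟩ := S.powerLaw c' hc'
    have abs_reflected : ∀ x y : ℝ, |x - -y| = |-x - y| := fun x y => by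
      rw [← abs_neg]; ring_nf
    refine ⟨s, al, be, hs, hal, hbe, fun x hx => ?_⟩
    rw [abs_reflected] at hx ⊢
    simpa only [reflect_apply, abs_reflected, neg_neg] using hpow (-x) hx

theorem refl_ret (S : CriticalLift) (q : ℕ) (p : ℤ) (x : ℝ) :
    S.refl.ret q (-p) x = -S.ret q p (-x) := by
  have hiter : S.refl.F^[q] x = -S.F^[q] (-x) := by
    induction q with
    | zero => simp
    | succ q ih =>
      rw [Function.iterate_succ_apply', ih, Function.iterate_succ_apply']
      exact (reflect_apply _ _).trans (by rw [neg_neg])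
  rw [ret_apply, ret_apply, hiter]
  push_cast
  ring

theorem refl_displacement (S : CriticalLift) (q : ℕ) (p : ℤ) :
    q * S.refl.rho - (-p : ℤ) = -(q * S.rho - p) := by
  simp only [refl]
  push_cast
  ring

theorem exists_ret_gap_le_of_neg (S : CriticalLift) :
    ∃ C : ℝ, 1 ≤ C ∧ ∀ (q : ℕ) (p : ℤ) (q' : ℕ), ClosestReturn S.rho q p q' →
      q * S.rho - p < 0 → ∀ x,
      x - S.ret q p x ≤ C * (S.ret q p x - S.ret q p (S.ret q p x)) := by
  obtain ⟨C, hC, hgap⟩ := S.refl.exists_ret_gap_le_of_pos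
  refine ⟨C, hC, fun q p q' G hθ x => ?_⟩
  have := (hgap q (-p) q' G.neg (by rw [refl_displacement]; linarith) (-x)).2
  simpa only [refl_ret, neg_neg, neg_sub_neg] using this

end CriticalLift

theorem exists_mul_rpow_le_half {K s : ℝ} (hK : 0 ≤ K) (hs : 1 < s) :
    ∃ d : ℝ, 0 < d ∧ d < 1 ∧ K * d ^ s ≤ d / 2 := by
  have hs₁ : 0 < s - 1 := sub_pos.2 hs
  set e : ℝ := (2 * K + 2)⁻¹
  have he : 0 < e := by positivity
  have hd : 0 < e ^ (s - 1)⁻¹ := Real.rpow_pos_of_pos he _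
  refine ⟨e ^ (s - 1)⁻¹, hd,
    Real.rpow_lt_one he.le (inv_lt_one_of_one_lt₀ (by linarith)) (inv_pos.2 hs₁), ?_⟩
  have hpow : (e ^ (s - 1)⁻¹) ^ s = e * e ^ (s - 1)⁻¹ := by
    calc (e ^ (s - 1)⁻¹) ^ s = (e ^ (s - 1)⁻¹) ^ (s - 1) * e ^ (s - 1)⁻¹ := by
          rw [← Real.rpow_add_one hd.ne', sub_add_cancel]
      _ = e * e ^ (s - 1)⁻¹ := by rw [Real.rpow_inv_rpow he.le hs₁.ne']
  have hKe : K * e ≤ 1 / 2 := by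
    rw [← div_eq_mul_inv, div_le_div_iff₀ (by linarith) two_pos]
    linarith
  rw [hpow, ← mul_assoc]
  linarith [mul_le_mul_of_nonneg_right hKe hd.le]

theorem sub_le_mul_crossRatio {a u v w t : ℝ} (huv : u < v) (hvw : v < w) (hwt : w < t)
    (ha : w - u ≤ a * (v - u)) : t - w ≤ a * crossRatio u v w t * (t - v) := by
  have hwu : 0 < w - u := by linarith
  have htv : 0 < t - v := by linarith
  have heq : a * crossRatio u v w t * (t - v) = a * (v - u) * (t - w) / (w - u) := by
    rw [crossRatio]
    field_simp
  rw [heq, le_div_iff₀ hwu, mul_comm]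
  exact mul_le_mul_of_nonneg_right ha (sub_pos.2 hwt).le

theorem rpow_ratio_le {f : ℝ → ℝ} (hf : StrictMono f) {c s al be : ℝ} (hal : 0 < al) (hbe : 0 ≤ be)
    (hpow : ∀ x, |x - c| ≤ 1 → al * |x - c| ^ s ≤ |f x - f c| ∧ |f x - f c| ≤ be * |x - c| ^ s)
    {v d : ℝ} (hv : v < c) (hv₁ : c - v ≤ 1) (hd : 0 < d) (hd₁ : d ≤ 1) :
    (f c - f (c - d * (c - v))) / (f c - f v) ≤ be / al * d ^ s := by
  have hD : 0 < c - v := sub_pos.2 hv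
  have hnum : f c - f (c - d * (c - v)) ≤ be * (d ^ s * (c - v) ^ s) := by
    have hx := (hpow (c - d * (c - v)) (by rw [abs_le]; constructor <;> nlinarith)).2
    rwa [abs_sub_comm, abs_of_pos (sub_pos.2 (hf (by nlinarith))), sub_sub_cancel_left, abs_neg,
      abs_of_pos (mul_pos hd hD), Real.mul_rpow hd.le hD.le] at hx
  have hden : al * (c - v) ^ s ≤ f c - f v := by
    have hx := (hpow v (by rw [abs_le]; constructor <;> linarith)).1
    rwa [abs_sub_comm, abs_of_pos hD, abs_sub_comm, abs_of_pos (sub_pos.2 (hf hv))] at hx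
  rw [div_le_iff₀ (sub_pos.2 (hf hv))]
  calc f c - f (c - d * (c - v)) ≤ be * (d ^ s * (c - v) ^ s) := hnum
    _ = be / al * d ^ s * (al * (c - v) ^ s) := by field_simp
    _ ≤ be / al * d ^ s * (f c - f v) := mul_le_mul_of_nonneg_left hden (by positivity)

namespace CriticalLift

variable {S : CriticalLift} {q q' : ℕ} {p p' : ℤ}

theorem crossRatio_ret_le_map (G : ClosestReturn S.rho q p q') (hθ : 0 < q * S.rho - p)
    (p' : ℤ) {u v w t : ℝ} (huv : u < v) (hvw : v < w) (hwt : w < t)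
    (ht : t < (S.ret q p)^[4] u) :
    crossRatio (S.ret q' p' u) (S.ret q' p' v) (S.ret q' p' w) (S.ret q' p' t) ≤
      S.retDistConst * crossRatio (S.F u) (S.F v) (S.F w) (S.F t) := by
  have hF : ∀ x, S.ret 1 0 x = S.F x := fun x => by simp [ret_apply]
  have hcr := crossRatio_ret_le_retDistConst G hθ (Nat.sub_le q' 1) p' (S.strictMono_F huv)
    (S.strictMono_F hvw) (S.strictMono_F hwt)
    (by rw [← hF u, ← ret_iterate_comm, hF]; exact S.strictMono_F ht)
  simpa only [← hF, ret_ret, Nat.sub_add_cancel G.next_pos, add_zero] using hcr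

theorem crossRatio_ret_le_rpow (G : ClosestReturn S.rho q p q') (hθ : 0 < q * S.rho - p) (p' : ℤ)
    {c σ al be : ℝ} (hal : 0 < al) (hbe : 0 ≤ be)
    (hpow : ∀ x, |x - c| ≤ 1 → al * |x - c| ^ σ ≤ |S.F x - S.F c| ∧
      |S.F x - S.F c| ≤ be * |x - c| ^ σ)
    {u v d : ℝ} (hu : S.ret q p u = v) (hv : S.ret q p v = c) (hd : 0 < d) (hd₁ : d < 1) :
    crossRatio (S.ret q' p' u) (S.ret q' p' v) (S.ret q' p' (c - d * (c - v))) (S.ret q' p' c) ≤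
      S.retDistConst * (be / al * d ^ σ) := by
  have huv : u < v := by simpa only [hu] using S.lt_ret hθ u
  have hvc : v < c := by simpa only [hv] using S.lt_ret hθ v
  have hD : c - v ≤ 1 := by linarith [hv ▸ S.ret_lt_add_one G.lt_one v]
  have hvx : v < c - d * (c - v) := by nlinarith
  have hxc : c - d * (c - v) < c := by nlinarith
  refine (crossRatio_ret_le_map G hθ p' huv hvx hxc ?_).trans (mul_le_mul_of_nonneg_left
    ((crossRatio_le_right (S.strictMono_F huv) (S.strictMono_F hvx) (S.strictMono_F hxc)).trans
      (rpow_ratio_le S.strictMono_F hal hbe hpow hvc hD hd hd₁.le))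
    (zero_le_one.trans S.one_le_retDistConst))
  simp only [Function.iterate_succ_apply, Function.iterate_zero, id, hu, hv]
  exact (S.lt_ret hθ c).trans (S.lt_ret hθ _)

/- Apply the cross-ratio inequality to `s⁻² c, s⁻¹ c, c - d D, c`, with `D = c - s⁻¹ c`, after one
application of `F`: there the power law makes the cross-ratio `O(d ^ s)`, much smaller than `d`. If
`g` moved `c` by less than `d D / 2`, the image cross-ratio would be of order `d`. -/
theorem exists_crit_gap_le (S : CriticalLift) {c : ℝ} (hc : c ∈ S.crit) :
    ∃ C : ℝ, 1 ≤ C ∧ ∀ (q : ℕ) (p : ℤ) (q' : ℕ) (p' : ℤ), ClosestReturn S.rho q p q' →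
      0 < q * S.rho - p → q' * S.rho - p' < 0 → 0 < (q * S.rho - p) + (q' * S.rho - p') →
      S.ret q p c - c ≤ C * (c - S.ret q' p' c) := by
  obtain ⟨σ, al, be, hσ, hal, hbe, hpow⟩ := S.powerLaw c hc
  obtain ⟨C₁, hC₁, hgap⟩ := S.exists_ret_gap_le_of_pos
  have hB := S.one_le_retDistConst
  obtain ⟨d, hd, hd₁, hdσ⟩ :=
    exists_mul_rpow_le_half (K := (C₁ + 1) * (S.retDistConst * (be / al)) * (C₁ + 1))
      (by positivity) hσ
  refine ⟨2 * C₁ / d, by rw [le_div_iff₀ hd]; linarith, fun q p q' p' G hθ hθ' hsum => ?_⟩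
  obtain ⟨v, hv⟩ := S.surjective_ret q p c
  obtain ⟨u, hu⟩ := S.surjective_ret q p v
  have huv : u < v := by simpa only [hu] using S.lt_ret hθ u
  have hvc : v < c := by simpa only [hv] using S.lt_ret hθ v
  set D := c - v
  have hD₀ : 0 < D := sub_pos.2 hvc
  have hdD : d * D < D := mul_lt_of_lt_one_left hD₀ hd₁
  have hvx : v < c - d * D := by linarith
  have hxc : c - d * D < c := by linarith [mul_pos hd hD₀]
  have hcr := crossRatio_ret_le_rpow G hθ p' hal hbe.le hpow hu hv hd hd₁
  have hg := S.strictMono_ret q' p'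
  have hgv : S.ret q p (S.ret q' p' u) = S.ret q' p' v := by rw [ret_comm, hu]
  have hgc : S.ret q p (S.ret q' p' v) = S.ret q' p' c := by rw [ret_comm, hv]
  have hgap_g := (hgap q p q' G hθ (S.ret q' p' u)).1
  rw [hgv, hgc] at hgap_g
  have hlen : S.ret q' p' c - S.ret q' p' v ≤ (C₁ + 1) * D := by
    have hu_gv : u < S.ret q' p' v := S.lt_of_h_lt (by rw [← hu, h_ret, h_ret]; linarith)
    have hgap_u := (hgap q p q' G hθ u).2
    rw [hu, hv] at hgap_u
    linarith [S.ret_lt hθ' c]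
  have hsmall : S.ret q' p' c - S.ret q' p' (c - d * D) ≤ d / 2 * D := by
    have hle := sub_le_mul_crossRatio (hg huv) (hg hvx) (hg hxc) (a := C₁ + 1)
      (by linarith [hg hxc])
    refine (hle.trans (mul_le_mul (mul_le_mul_of_nonneg_left hcr (by linarith)) hlen
      (sub_pos.2 (hg hvc)).le (by positivity))).trans ?_
    convert mul_le_mul_of_nonneg_right hdσ hD₀.le using 1
    ring
  have hmove : d * D / 2 ≤ c - S.ret q' p' c := by linarith [S.ret_lt hθ' (c - d * D)]
  have hgap_v := (hgap q p q' G hθ v).1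
  rw [hv] at hgap_v
  rw [div_mul_eq_mul_div, le_div_iff₀ hd]
  nlinarith

end CriticalLift

/-! ### Atoms next to critical spots -/

/-- Two consecutive closest returns, the first of which moves points to the right and the second,
by less, to the left. -/
structure ReturnPair (ρ : ℝ) (q : ℕ) (p : ℤ) (q' : ℕ) (p' : ℤ) : Prop where
  closest : ClosestReturn ρ q p q'
  next_closest : ∃ q'', ClosestReturn ρ q' p' q''
  pos : 0 < q * ρ - p
  next_neg : q' * ρ - p' < 0
  sum_pos : 0 < (q * ρ - p) + (q' * ρ - p')

namespace CriticalLift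

variable {S : CriticalLift} {q q' : ℕ} {p p' : ℤ}

theorem exists_forall_crit_gap_le (S : CriticalLift) :
    ∃ C : ℝ, 1 ≤ C ∧ ∀ (q : ℕ) (p : ℤ) (q' : ℕ) (p' : ℤ), ReturnPair S.rho q p q' p' →
      ∀ c ∈ S.crit, S.ret q p c - c ≤ C * (c - S.ret q' p' c) := by
  choose! C _ hgap using fun c => S.exists_crit_gap_le (c := c)
  obtain ⟨M, hM⟩ := (S.crit.image C).exists_le
  refine ⟨max 1 M, le_max_left _ _, fun q p q' p' R c hc => ?_⟩
  refine (hgap c hc q p q' p' R.closest R.pos R.next_neg R.sum_pos).trans ?_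
  exact mul_le_mul_of_nonneg_right (le_max_of_le_right (hM _ (Finset.mem_image_of_mem C hc)))
    (sub_pos.2 (S.ret_lt R.next_neg c)).le

theorem gap_le_of_ret_gap_le (R : ReturnPair S.rho q p q' p') {C₁ C : ℝ} (hC₁ : 0 ≤ C₁)
    (hC : 0 ≤ C) {k : ℕ} (hk : k ≤ q') {a : ℤ} {x y : ℝ} (hxy : S.ret k a x = y)
    (hright : S.ret q p y - y ≤ C₁ * (S.ret q p (S.ret q p y) - S.ret q p y))
    (hy : S.ret q p y - y ≤ C * (y - S.ret q' p' y)) :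
    S.ret q p x - x ≤ S.retDistConst * ((1 + C) * (1 + C₁)) * (x - S.ret q' p' x) := by
  subst hxy
  have hs := S.lt_ret R.pos
  have hg := S.ret_lt R.next_neg
  have hsmono := S.strictMono_ret q p
  have hx_lt : x < S.ret q p (S.ret q' p' x) := S.lt_of_h_lt (by
    rw [h_ret, h_ret]; linarith [R.sum_pos])
  have hlower := inv_mul_inv_le_crossRatio (hg (S.ret k a x)) (hs _) (hs _)
    (show 0 < 1 + C by positivity) (show 0 < 1 + C₁ by positivity) (by linarith) (by linarith)
  have hcr := crossRatio_ret_le_retDistConst R.closest R.pos hk a (hg x) (hs x) (hs _)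
    ((hsmono (hsmono hx_lt)).trans (hs _))
  rw [S.ret_comm k q', S.ret_comm k q, S.ret_comm k q, S.ret_comm k q] at hcr
  have hle := (hlower.trans hcr).trans (mul_le_mul_of_nonneg_left
    (crossRatio_le_left (hg x) (hs x) (hs _)) (zero_le_one.trans S.one_le_retDistConst))
  have hwidth : 0 < S.ret q p x - S.ret q' p' x := by linarith [hs x, hg x]
  rw [← mul_inv, ← mul_div_assoc, le_div_iff₀ hwidth, inv_mul_le_iff₀ (by positivity)] at hle
  linarith [hg x]

theorem exists_gap_le_of_ret_mem_crit (S : CriticalLift) :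
    ∃ C : ℝ, 1 ≤ C ∧ ∀ (q : ℕ) (p : ℤ) (q' : ℕ) (p' : ℤ), ReturnPair S.rho q p q' p' →
      ∀ x w b : ℝ, w ∈ Icc x (S.ret q p x) → w ∈ Icc (S.ret q' p' b) b →
      ∀ m < q', ∀ a : ℤ, S.ret m a w ∈ S.crit →
        S.ret q p x - x ≤ C * (S.ret q' p' b - S.ret q' p' (S.ret q' p' b)) := by
  obtain ⟨C₁, hC₁, hgap⟩ := S.exists_ret_gap_le_of_pos
  obtain ⟨C₂, hC₂, hgap'⟩ := S.exists_ret_gap_le_of_neg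
  obtain ⟨K, hK, hcrit⟩ := S.exists_forall_crit_gap_le
  have hB := S.one_le_retDistConst
  refine ⟨(1 + C₁) * (S.retDistConst * ((1 + K) * (1 + C₁)) * (1 + C₂)), ?_,
    fun q p q' p' R x w b hw hwb m hm a hc => ?_⟩
  · refine one_le_mul_of_one_le_of_one_le (by linarith) (one_le_mul_of_one_le_of_one_le
      (one_le_mul_of_one_le_of_one_le hB (one_le_mul_of_one_le_of_one_le ?_ ?_)) ?_) <;> linarith
  obtain ⟨q'', G'⟩ := R.next_closest
  have hsmono := S.strictMono_ret q p
  have hx : S.ret q p x - x ≤ (1 + C₁) * (S.ret q p w - w) := by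
    obtain ⟨z, rfl⟩ := S.surjective_ret q p w
    have hzx : z ≤ x := hsmono.le_iff_le.1 hw.2
    linarith [(hgap q p q' R.closest R.pos z).2, hsmono.monotone hw.1]
  have hw_le : S.ret q p w - w ≤ S.retDistConst * ((1 + K) * (1 + C₁)) * (w - S.ret q' p' w) :=
    gap_le_of_ret_gap_le R (by linarith) (by linarith) hm.le rfl
      (hgap q p q' R.closest R.pos _).2 (hcrit q p q' p' R _ hc)
  have hb : w - S.ret q' p' w ≤ (1 + C₂) * (S.ret q' p' b - S.ret q' p' (S.ret q' p' b)) := by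
    linarith [(S.strictMono_ret q' p').monotone hwb.1, hgap' q' p' q'' G' R.next_neg b, hwb.2]
  calc S.ret q p x - x ≤ (1 + C₁) * (S.ret q p w - w) := hx
    _ ≤ (1 + C₁) * (S.retDistConst * ((1 + K) * (1 + C₁)) *
          ((1 + C₂) * (S.ret q' p' b - S.ret q' p' (S.ret q' p' b)))) :=
      mul_le_mul_of_nonneg_left (hw_le.trans (mul_le_mul_of_nonneg_left hb (by positivity)))
        (by linarith)
    _ = _ := by ring

theorem exists_gap_le_of_mem_crit (S : CriticalLift) :
    ∃ C : ℝ, 1 ≤ C ∧ ∀ (q : ℕ) (p : ℤ) (q' : ℕ) (p' : ℤ), ReturnPair S.rho q p q' p' →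
      ∀ c ∈ S.crit, S.ret q p c - c ≤
        C * (S.ret q' p' (S.ret q p c) - S.ret q' p' (S.ret q' p' (S.ret q p c))) := by
  obtain ⟨C₁, hC₁, hgap⟩ := S.exists_ret_gap_le_of_pos
  obtain ⟨C₂, hC₂, hgap'⟩ := S.exists_ret_gap_le_of_neg
  obtain ⟨K, hK, hcrit⟩ := S.exists_forall_crit_gap_le
  have hB := S.one_le_retDistConst
  refine ⟨C₁ * (S.retDistConst * ((1 + (K + 1) * C₂) * (1 + C₁)) * C₂), ?_,
    fun q p q' p' R c hc => ?_⟩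
  · refine one_le_mul_of_one_le_of_one_le hC₁ (one_le_mul_of_one_le_of_one_le
      (one_le_mul_of_one_le_of_one_le hB (one_le_mul_of_one_le_of_one_le ?_ ?_)) hC₂)
    · exact le_add_of_nonneg_right (by positivity)
    · linarith
  obtain ⟨q'', G'⟩ := R.next_closest
  have hg := S.ret_lt R.next_neg
  have hgc : S.ret q p (S.ret q' p' c) - S.ret q' p' c ≤
      (K + 1) * C₂ * (S.ret q' p' c - S.ret q' p' (S.ret q' p' c)) := by
    have hle : S.ret q p (S.ret q' p' c) - S.ret q' p' c ≤ (K + 1) * (c - S.ret q' p' c) := by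
      linarith [S.strictMono_ret q p (hg c), hcrit q p q' p' R c hc]
    rw [mul_assoc]
    exact hle.trans (mul_le_mul_of_nonneg_left (hgap' q' p' q'' G' R.next_neg c) (by linarith))
  have hsc : S.ret q p (S.ret q p c) - S.ret q p c ≤
      S.retDistConst * ((1 + (K + 1) * C₂) * (1 + C₁)) *
        (S.ret q p c - S.ret q' p' (S.ret q p c)) := by
    refine gap_le_of_ret_gap_le R (k := q' - q) (a := p' - p) (by linarith) (by positivity)
      (Nat.sub_le _ _) ?_ (hgap q p q' R.closest R.pos _).2 hgc
    rw [ret_ret, Nat.sub_add_cancel R.closest.le, sub_add_cancel]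
  calc S.ret q p c - c ≤ C₁ * (S.ret q p (S.ret q p c) - S.ret q p c) :=
        (hgap q p q' R.closest R.pos c).2
    _ ≤ C₁ * (S.retDistConst * ((1 + (K + 1) * C₂) * (1 + C₁)) *
          (C₂ * (S.ret q' p' (S.ret q p c) - S.ret q' p' (S.ret q' p' (S.ret q p c))))) :=
      mul_le_mul_of_nonneg_left (hsc.trans (mul_le_mul_of_nonneg_left
        (hgap' q' p' q'' G' R.next_neg _) (by positivity))) (by linarith)
    _ = _ := by ring

theorem iterate_ret_mem_Icc (R : ReturnPair S.rho q p q' p') (x : ℝ) {j : ℕ}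
    (hj : 0 < (q * S.rho - p) + j * (q' * S.rho - p')) :
    (S.ret q' p')^[j] (S.ret q p x) ∈ Icc x (S.ret q p x) := by
  have hanti := (S.strictMono_ret q' p').strictAnti_iterate_of_map_lt
    (S.ret_lt R.next_neg (S.ret q p x))
  refine ⟨(S.lt_of_h_lt ?_).le, hanti.antitone (Nat.zero_le j)⟩
  rw [ret_iterate, h_ret, h_ret]
  push_cast
  linarith

theorem displacement_pos_of_le (R : ReturnPair S.rho q p q' p') {k j : ℕ} (hkj : k ≤ j)
    (hj : 0 < (q * S.rho - p) + j * (q' * S.rho - p')) :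
    0 < (q * S.rho - p) + k * (q' * S.rho - p') := by
  have hk : (k : ℝ) ≤ j := mod_cast hkj
  nlinarith [R.next_neg]

/-- The interval with endpoints `u` and `v` contains a critical point of the `n`-th iterate of the
circle map. -/
def IsCriticalSpot (S : CriticalLift) (n : ℕ) (u v : ℝ) : Prop :=
  ∃ w ∈ uIcc u v, ∃ m < n, ∃ a : ℤ, S.ret m a w ∈ S.crit

/-- The total length of the intervals `[g^k (s x), g^(k+1) (s x)]`, `i ≤ k < j`, for the returns
`s = S.ret q p` and `g = S.ret q' p'`. -/
def orbitLength (S : CriticalLift) (q : ℕ) (p : ℤ) (q' : ℕ) (p' : ℤ) (x : ℝ) (i j : ℕ) : ℝ :=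
  ∑ k ∈ Finset.Ico i j,
    |(S.ret q' p')^[k + 1] (S.ret q p x) - (S.ret q' p')^[k] (S.ret q p x)|

theorem orbitLength_le (R : ReturnPair S.rho q p q' p') (x : ℝ) {i j : ℕ} (hij : i ≤ j)
    (hj : 0 < (q * S.rho - p) + j * (q' * S.rho - p')) :
    S.orbitLength q p q' p' x i j ≤ S.ret q p x - x := by
  have hi := (iterate_ret_mem_Icc R x (displacement_pos_of_le R hij hj)).2
  have hj := (iterate_ret_mem_Icc R x hj).1
  have hgap : ∀ k, |(S.ret q' p')^[k + 1] (S.ret q p x) - (S.ret q' p')^[k] (S.ret q p x)| =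
      (S.ret q' p')^[k] (S.ret q p x) - (S.ret q' p')^[k + 1] (S.ret q p x) := fun k => by
    rw [Function.iterate_succ_apply', abs_of_neg (sub_neg.2 (S.ret_lt R.next_neg _)), neg_sub]
  rw [orbitLength, Finset.sum_congr rfl fun k _ => hgap k, Finset.sum_Ico_eq_sub _ hij,
    Finset.sum_range_sub', Finset.sum_range_sub']
  linarith

theorem exists_gap_le_orbitLength (S : CriticalLift) :
    ∃ C : ℝ, 1 ≤ C ∧ ∀ (q : ℕ) (p : ℤ) (q' : ℕ) (p' : ℤ), ReturnPair S.rho q p q' p' →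
      ∀ c ∈ S.crit, ∀ i j : ℕ, i + 1 < j → 0 < (q * S.rho - p) + j * (q' * S.rho - p') →
      (i = 0 ∨ S.IsCriticalSpot q' ((S.ret q' p')^[i] (S.ret q p c))
        ((S.ret q' p')^[i + 1] (S.ret q p c))) →
      S.ret q p c - c ≤ C * S.orbitLength q p q' p' c (i + 1) j := by
  obtain ⟨C, hC, hspot⟩ := S.exists_gap_le_of_ret_mem_crit
  obtain ⟨C', -, hstart⟩ := S.exists_gap_le_of_mem_crit
  refine ⟨max C C', le_max_of_le_left hC, fun q p q' p' R c hc i j hij hj hi => ?_⟩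
  have hg := S.ret_lt R.next_neg
  have hg_sub : ∀ x, 0 ≤ S.ret q' p' x - S.ret q' p' (S.ret q' p' x) :=
    fun x => sub_nonneg.2 (hg _).le
  set b := (S.ret q' p')^[i] (S.ret q p c) with hb
  have hfirst : S.ret q' p' b - S.ret q' p' (S.ret q' p' b) ≤
      S.orbitLength q p q' p' c (i + 1) j := by
    have hle : |(S.ret q' p')^[i + 1 + 1] (S.ret q p c) - (S.ret q' p')^[i + 1] (S.ret q p c)| ≤
        S.orbitLength q p q' p' c (i + 1) j :=
      Finset.single_le_sum (f := fun k => |(S.ret q' p')^[k + 1] (S.ret q p c) -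
        (S.ret q' p')^[k] (S.ret q p c)|) (fun k _ => abs_nonneg _)
        (Finset.mem_Ico.2 ⟨le_rfl, hij⟩)
    rw [Function.iterate_succ_apply', Function.iterate_succ_apply', ← hb, abs_sub_comm] at hle
    exact (le_abs_self _).trans hle
  refine le_trans ?_ (mul_le_mul_of_nonneg_left hfirst (by positivity))
  rcases hi with rfl | ⟨w, hw, m, hm, a, hwc⟩
  · exact (hstart q p q' p' R c hc).trans
      (mul_le_mul_of_nonneg_right (le_max_right _ _) (hg_sub _))
  · rw [Function.iterate_succ_apply', uIcc_of_ge (hg _).le] at hw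
    have hwx : w ∈ Icc c (S.ret q p c) := by
      refine ⟨le_trans ?_ hw.1, hw.2.trans (iterate_ret_mem_Icc R c
        (displacement_pos_of_le R (by omega) hj)).2⟩
      rw [← Function.iterate_succ_apply' (S.ret q' p')]
      exact (iterate_ret_mem_Icc R c (displacement_pos_of_le R hij.le hj)).1
    exact (hspot q p q' p' R c w b hwx hw m hm a hwc).trans
      (mul_le_mul_of_nonneg_right (le_max_left _ _) (hg_sub _))

theorem refl_ret_iterate (S : CriticalLift) (q : ℕ) (p : ℤ) (k : ℕ) (x : ℝ) :
    (S.refl.ret q (-p))^[k] x = -(S.ret q p)^[k] (-x) := by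
  rw [ret_iterate, ret_iterate, mul_neg, refl_ret]

theorem refl_orbitLength (S : CriticalLift) (q q' : ℕ) (p p' : ℤ) (x : ℝ) (i j : ℕ) :
    S.refl.orbitLength q (-p) q' (-p') (-x) i j = S.orbitLength q p q' p' x i j := by
  simp only [orbitLength, refl_ret_iterate, refl_ret, neg_neg, neg_sub_neg, abs_sub_comm]

theorem IsCriticalSpot.refl {n : ℕ} {u v : ℝ} (h : S.IsCriticalSpot n u v) :
    S.refl.IsCriticalSpot n (-u) (-v) := by
  obtain ⟨w, hw, m, hm, a, hc⟩ := h
  refine ⟨-w, ?_, m, hm, -a, ?_⟩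
  · rw [← image_neg_uIcc]
    exact mem_image_of_mem _ hw
  · rw [refl_ret, neg_neg]
    exact Finset.mem_image_of_mem _ hc

theorem exists_orbitLength_comparable (S : CriticalLift) :
    ∃ C : ℝ, 1 ≤ C ∧ ∀ (q : ℕ) (p : ℤ) (q' : ℕ) (p' : ℤ) (q'' : ℕ),
      ClosestReturn S.rho q p q' → ClosestReturn S.rho q' p' q'' →
      (q * S.rho - p) * (q' * S.rho - p') < 0 →
      ∀ c ∈ S.crit, ∀ i j : ℕ, i + 1 < j → j * |q' * S.rho - p'| < |q * S.rho - p| →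
      (i = 0 ∨ S.IsCriticalSpot q' ((S.ret q' p')^[i] (S.ret q p c))
        ((S.ret q' p')^[i + 1] (S.ret q p c))) →
      |S.ret q p c - c| ≤ C * S.orbitLength q p q' p' c (i + 1) j ∧
        S.orbitLength q p q' p' c (i + 1) j ≤ |S.ret q p c - c| := by
  obtain ⟨C, hC, hpos⟩ := S.exists_gap_le_orbitLength
  obtain ⟨C', -, hneg⟩ := S.refl.exists_gap_le_orbitLength
  refine ⟨max C C', le_max_of_le_left hC, fun q p q' p' q'' G G' hopp c hc i j hij hj hi => ?_⟩
  have hj₁ : (1 : ℝ) ≤ j := mod_cast (by omega : 1 ≤ j)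
  have hlength : 0 ≤ S.orbitLength q p q' p' c (i + 1) j :=
    Finset.sum_nonneg fun _ _ => abs_nonneg _
  rcases mul_neg_iff.1 hopp with ⟨hθ, hθ'⟩ | ⟨hθ, hθ'⟩
  · rw [abs_of_pos hθ, abs_of_neg hθ'] at hj
    have R : ReturnPair S.rho q p q' p' := ⟨G, ⟨q'', G'⟩, hθ, hθ', by nlinarith⟩
    rw [abs_of_pos (sub_pos.2 (S.lt_ret hθ c))]
    exact ⟨(hpos q p q' p' R c hc i j hij (by linarith) hi).trans
      (mul_le_mul_of_nonneg_right (le_max_left _ _) hlength),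
      orbitLength_le R c hij.le (by linarith)⟩
  · rw [abs_of_neg hθ, abs_of_pos hθ'] at hj
    have hrefl := S.refl_displacement
    have R : ReturnPair S.refl.rho q (-p) q' (-p') := by
      refine ⟨G.neg, ⟨q'', G'.neg⟩, ?_, ?_, ?_⟩ <;> simp only [hrefl] <;> nlinarith
    have hj' : 0 < (q * S.refl.rho - (-p : ℤ)) + j * (q' * S.refl.rho - (-p' : ℤ)) := by
      rw [hrefl, hrefl]; linarith
    have hlower := hneg q (-p) q' (-p') R (-c) (Finset.mem_image_of_mem _ hc) i j hij hj'
      (hi.imp_right fun h => by simpa only [refl_ret_iterate, refl_ret, neg_neg] using h.refl)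
    have hupper := orbitLength_le R (-c) hij.le hj'
    rw [refl_orbitLength, refl_ret, neg_neg, neg_sub_neg] at hlower hupper
    rw [abs_sub_comm, abs_of_pos (sub_pos.2 (S.ret_lt hθ c))]
    exact ⟨hlower.trans (mul_le_mul_of_nonneg_right (le_max_right _ _) hlength), hupper⟩

end CriticalLift

/-! ### Convergents of the rotation number -/

section BestApproximation

variable {ρ : ℝ}

theorem exists_mul_sub_mem_Icc {m₁ m₂ : ℕ} {n₁ n₂ : ℤ} {L : ℝ} (h₁ : 0 < m₁ * ρ - n₁)
    (h₁L : m₁ * ρ - n₁ ≤ L) (h₂ : m₂ * ρ - n₂ < 0) (h₂L : -L ≤ m₂ * ρ - n₂) (t : ℝ) :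
    ∃ (k : ℕ) (a : ℤ), k ≤ m₁ + m₂ ∧ k * ρ - a ∈ Icc t (t + L) := by
  obtain ⟨k, hk, hmin⟩ := Finset.exists_min_image (Finset.range (m₁ + m₂ + 1))
    (fun k : ℕ => k * ρ - ⌊k * ρ - t⌋) ⟨0, by simp⟩
  have hk' : k ≤ m₁ + m₂ := Nat.lt_succ_iff.1 (Finset.mem_range.1 hk)
  have hleast : ∀ (j : ℕ) (b : ℤ), j ≤ m₁ + m₂ → t ≤ j * ρ - b →
      k * ρ - ⌊k * ρ - t⌋ ≤ j * ρ - b := fun j b hj hb => by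
    refine (hmin j (Finset.mem_range.2 (by omega))).trans (sub_le_sub_left ?_ _)
    exact_mod_cast Int.le_floor.2 (le_sub_comm.1 hb)
  have ht : t ≤ k * ρ - ⌊k * ρ - t⌋ := le_sub_comm.1 (Int.floor_le _)
  refine ⟨k, ⌊k * ρ - t⌋, hk', ht, ?_⟩
  by_contra! hfar
  rcases le_or_gt m₁ k with hle | hlt
  · have := hleast (k - m₁) (⌊k * ρ - t⌋ - n₁) (by omega)
      (by push_cast [Nat.cast_sub hle]; linarith)
    push_cast [Nat.cast_sub hle] at this
    linarith
  · have := hleast (k + m₂) (⌊k * ρ - t⌋ + n₂) (by omega) (by push_cast; linarith)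
    push_cast at this
    linarith

theorem exists_eq_combination {q q' p p' : ℤ} (hdet : (p' * q - p * q') ^ 2 = 1) (d a : ℤ) :
    ∃ U V : ℤ, d = U * q + V * q' ∧ a = U * p + V * p' := by
  refine ⟨(d * p' - a * q') * (p' * q - p * q'), (q * a - p * d) * (p' * q - p * q'), ?_, ?_⟩
  · linear_combination -d * hdet
  · linear_combination -a * hdet

theorem abs_lt_abs_add_of_mul_pos {x y : ℝ} (hxy : 0 < x * y) : |x| < |x + y| :=
  sq_lt_sq.1 (by nlinarith [sq_nonneg y])

theorem abs_lt_abs_mul_sub_or_eq {q q' d : ℕ} {p p' a : ℤ}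
    (hdet : (p' * q - p * q') ^ 2 = 1) (hopp : (q * ρ - p) * (q' * ρ - p') < 0) (hd : 0 < d)
    (hd' : d < q') : |q * ρ - p| < |d * ρ - a| ∨ (d = q ∧ a = p) := by
  obtain ⟨U, V, hdUV, haUV⟩ := exists_eq_combination hdet d a
  have hθ : 0 < |q * ρ - p| := abs_pos.2 (left_ne_zero_of_mul hopp.ne)
  have hcomb : d * ρ - a = U * (q * ρ - p) + V * (q' * ρ - p') := by
    have hd_real : (d : ℝ) = U * q + V * q' := by exact_mod_cast hdUV
    rw [hd_real, haUV]
    push_cast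
    ring
  have hd₀ : (0 : ℤ) < d := mod_cast hd
  have hdq : (d : ℤ) < q' := mod_cast hd'
  have hq : (0 : ℤ) ≤ q := by positivity
  rcases eq_or_ne V 0 with rfl | hV
  · have hU : 1 ≤ U := by by_contra! hU; nlinarith [hd₀, hdq, hq]
    rcases eq_or_lt_of_le hU with rfl | hU
    · right
      constructor <;> push_cast at * <;> omega
    · left
      have hU' : (1 : ℝ) < U := mod_cast hU
      rw [hcomb, Int.cast_zero, zero_mul, add_zero, abs_mul, abs_of_pos (one_pos.trans hU')]
      exact lt_mul_of_one_lt_left hθ hU'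
  · left
    have hUV : U * V < 0 := by
      rcases lt_or_gt_of_ne hV with hV | hV
      · exact mul_neg_of_pos_of_neg (by by_contra! hU; nlinarith [hd₀, hdq, hq]) hV
      · exact mul_neg_of_neg_of_pos (by by_contra! hU; nlinarith [hd₀, hdq, hq]) hV
    have hU : (1 : ℝ) ≤ |(U : ℝ)| := mod_cast Int.one_le_abs (left_ne_zero_of_mul hUV.ne)
    have hUV' : (U * V : ℝ) < 0 := mod_cast hUV
    rw [hcomb]
    refine lt_of_le_of_lt ?_ (abs_lt_abs_add_of_mul_pos ?_)
    · rw [abs_mul]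
      exact le_mul_of_one_le_left hθ.le hU
    · calc 0 < U * V * ((q * ρ - p) * (q' * ρ - p')) := mul_pos_of_neg_of_neg hUV' hopp
        _ = _ := by ring

theorem ClosestReturn.of_det {q q' : ℕ} {p p' : ℤ} (hq : 0 < q) (hle : q ≤ q')
    (hdet : (p' * q - p * q') ^ 2 = 1) (hopp : (q * ρ - p) * (q' * ρ - p') < 0)
    (hlt : |q' * ρ - p'| < |q * ρ - p|) (hone : |q * ρ - p| < 1) : ClosestReturn ρ q p q' where
  pos := hq
  le := hle
  abs_pos := (_root_.abs_nonneg _).trans_lt hlt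
  abs_lt_one := hone
  best _ _ hd hd' := abs_lt_abs_mul_sub_or_eq hdet hopp hd hd'
  cover t := by
    have hsum : ∃ (k : ℕ) (a : ℤ), k ≤ q + q' ∧ k * ρ - a ∈ Icc t (t + |q * ρ - p|) := by
      rcases mul_neg_iff.1 hopp with ⟨hθ, hθ'⟩ | ⟨hθ, hθ'⟩
      · exact exists_mul_sub_mem_Icc hθ (le_abs_self _) hθ' (neg_le_of_abs_le hlt.le) t
      · rw [add_comm]
        exact exists_mul_sub_mem_Icc hθ' ((le_abs_self _).trans hlt.le) hθ (neg_abs_le _) t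
    obtain ⟨k, a, hk, ha⟩ := hsum
    exact ⟨k, a, by omega, ha⟩

end BestApproximation

section ContinuedFraction

variable {ρ : ℝ}

theorem irrational_iterate_gaussMap (hρ : Irrational ρ) (n : ℕ) : Irrational (gaussMap^[n] ρ) := by
  induction n with
  | zero => exact hρ
  | succ n ih =>
    rw [Function.iterate_succ_apply']
    exact ih.inv.sub_intCast _

theorem iterate_gaussMap_mem_Ioo (hρ : Irrational ρ) (hmem : ρ ∈ Ioo (0 : ℝ) 1) (n : ℕ) :
    gaussMap^[n] ρ ∈ Ioo (0 : ℝ) 1 := by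
  cases n with
  | zero => exact hmem
  | succ n =>
    have hne := (irrational_iterate_gaussMap hρ (n + 1)).ne_zero
    rw [Function.iterate_succ_apply'] at hne ⊢
    exact ⟨(Int.fract_nonneg _).lt_of_ne' hne, Int.fract_lt_one _⟩

theorem inv_iterate_gaussMap (hρ : Irrational ρ) (hmem : ρ ∈ Ioo (0 : ℝ) 1) (n : ℕ) :
    (gaussMap^[n] ρ)⁻¹ = cfDigit ρ n + gaussMap^[n + 1] ρ := by
  have hpos := inv_pos.2 (iterate_gaussMap_mem_Ioo hρ hmem n).1
  have hdigit : ((cfDigit ρ n : ℤ) : ℝ) = ⌊(gaussMap^[n] ρ)⁻¹⌋ :=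
    congrArg _ (Int.toNat_of_nonneg (Int.floor_nonneg.2 hpos.le))
  rw [← Int.cast_natCast, hdigit, Function.iterate_succ_apply']
  exact (Int.floor_add_fract _).symm

theorem one_le_cfDigit (hρ : Irrational ρ) (hmem : ρ ∈ Ioo (0 : ℝ) 1) (n : ℕ) :
    1 ≤ cfDigit ρ n := by
  obtain ⟨hpos, hlt⟩ := iterate_gaussMap_mem_Ioo hρ hmem n
  have hfloor : 1 ≤ ⌊(gaussMap^[n] ρ)⁻¹⌋ := by
    rw [Int.le_floor, Int.cast_one]
    exact (one_lt_inv₀ hpos).2 hlt |>.le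
  exact Int.le_toNat (by omega) |>.2 (mod_cast hfloor)

/-- The signed displacement `q_n ρ - p_n` of the `n`-th return of the rotation by `ρ`. -/
def convergentError (ρ : ℝ) (n : ℕ) : ℝ := qDen ρ n * ρ - (pNum ρ n : ℤ)

theorem convergentError_add_two (n : ℕ) :
    convergentError ρ (n + 2) =
      cfDigit ρ (n + 1) * convergentError ρ (n + 1) + convergentError ρ n := by
  simp only [convergentError, qDen, pNum]
  push_cast
  ring

theorem convergentError_succ (hρ : Irrational ρ) (hmem : ρ ∈ Ioo (0 : ℝ) 1) (n : ℕ) :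
    convergentError ρ (n + 1) = -gaussMap^[n + 1] ρ * convergentError ρ n := by
  have hdigit : ∀ n, (cfDigit ρ n : ℝ) = (gaussMap^[n] ρ)⁻¹ - gaussMap^[n + 1] ρ :=
    fun n => eq_sub_of_add_eq (inv_iterate_gaussMap hρ hmem n).symm
  induction n with
  | zero =>
    have hρ₀ := hmem.1.ne'
    simp [convergentError, qDen, pNum, hdigit, sub_mul, inv_mul_cancel₀ hρ₀]
  | succ n ih =>
    have hne := (iterate_gaussMap_mem_Ioo hρ hmem (n + 1)).1.ne'
    rw [convergentError_add_two, hdigit, sub_mul, ih]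
    field_simp
    ring

theorem convergentError_ne_zero (hρ : Irrational ρ) (hmem : ρ ∈ Ioo (0 : ℝ) 1) (n : ℕ) :
    convergentError ρ n ≠ 0 := by
  induction n with
  | zero => simpa [convergentError, qDen, pNum] using hmem.1.ne'
  | succ n ih =>
    rw [convergentError_succ hρ hmem]
    exact mul_ne_zero (neg_ne_zero.2 (iterate_gaussMap_mem_Ioo hρ hmem (n + 1)).1.ne') ih

theorem convergentError_mul_succ_neg (hρ : Irrational ρ) (hmem : ρ ∈ Ioo (0 : ℝ) 1) (n : ℕ) :
    convergentError ρ n * convergentError ρ (n + 1) < 0 := by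
  have hsq := mul_self_pos.2 (convergentError_ne_zero hρ hmem n)
  rw [convergentError_succ hρ hmem]
  nlinarith [(iterate_gaussMap_mem_Ioo hρ hmem (n + 1)).1]

theorem abs_convergentError_succ_lt (hρ : Irrational ρ) (hmem : ρ ∈ Ioo (0 : ℝ) 1) (n : ℕ) :
    |convergentError ρ (n + 1)| < |convergentError ρ n| := by
  obtain ⟨hpos, hlt⟩ := iterate_gaussMap_mem_Ioo hρ hmem (n + 1)
  rw [convergentError_succ hρ hmem, abs_mul, abs_neg, abs_of_pos hpos]
  exact mul_lt_of_lt_one_left (abs_pos.2 (convergentError_ne_zero hρ hmem n)) hlt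

theorem abs_convergentError_lt_one (hρ : Irrational ρ) (hmem : ρ ∈ Ioo (0 : ℝ) 1) (n : ℕ) :
    |convergentError ρ n| < 1 := by
  induction n with
  | zero => simpa [convergentError, qDen, pNum, abs_of_pos hmem.1] using hmem.2
  | succ n ih => exact (abs_convergentError_succ_lt hρ hmem n).trans ih

theorem cfDigit_mul_abs_convergentError_lt (hρ : Irrational ρ) (hmem : ρ ∈ Ioo (0 : ℝ) 1)
    (n : ℕ) : cfDigit ρ (n + 1) * |convergentError ρ (n + 1)| < |convergentError ρ n| := by
  have hpos := (iterate_gaussMap_mem_Ioo hρ hmem (n + 1)).1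
  have hdigit : cfDigit ρ (n + 1) * gaussMap^[n + 1] ρ < 1 := by
    rw [← lt_div_iff₀ hpos, one_div, inv_iterate_gaussMap hρ hmem]
    exact lt_add_of_pos_right _ (iterate_gaussMap_mem_Ioo hρ hmem (n + 2)).1
  rw [convergentError_succ hρ hmem, abs_mul, abs_neg, abs_of_pos hpos, ← mul_assoc]
  exact mul_lt_of_lt_one_left (abs_pos.2 (convergentError_ne_zero hρ hmem n)) hdigit

theorem qDen_pos (hρ : Irrational ρ) (hmem : ρ ∈ Ioo (0 : ℝ) 1) (n : ℕ) : 0 < qDen ρ n := by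
  induction n using qDen.induct with
  | case1 => exact one_pos
  | case2 => exact one_le_cfDigit hρ hmem 0
  | case3 n _ ih => exact Nat.add_pos_right _ ih

theorem qDen_le_succ (hρ : Irrational ρ) (hmem : ρ ∈ Ioo (0 : ℝ) 1) (n : ℕ) :
    qDen ρ n ≤ qDen ρ (n + 1) := by
  cases n with
  | zero => exact one_le_cfDigit hρ hmem 0
  | succ n =>
    exact (Nat.le_mul_of_pos_left _ (one_le_cfDigit hρ hmem (n + 1))).trans (Nat.le_add_right _ _)

theorem sq_det_convergents (n : ℕ) :
    ((pNum ρ (n + 1) : ℤ) * qDen ρ n - pNum ρ n * qDen ρ (n + 1)) ^ 2 = 1 := by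
  induction n with
  | zero => simp [qDen, pNum]
  | succ n ih =>
    rw [← ih]
    simp only [qDen, pNum]
    push_cast
    ring

theorem closestReturn_qDen (hρ : Irrational ρ) (hmem : ρ ∈ Ioo (0 : ℝ) 1) (n : ℕ) :
    ClosestReturn ρ (qDen ρ n) (pNum ρ n) (qDen ρ (n + 1)) :=
  .of_det (qDen_pos hρ hmem n) (qDen_le_succ hρ hmem n) (sq_det_convergents n)
    (convergentError_mul_succ_neg hρ hmem n) (abs_convergentError_succ_lt hρ hmem n)
    (abs_convergentError_lt_one hρ hmem n)

end ContinuedFraction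

/-! ### Cross-ratios under maps of nonpositive Schwarzian derivative -/

/-- `F` is `C³` with positive derivative and nonpositive Schwarzian derivative on the interval
`s`. -/
structure SchwarzianNonposOn (F : ℝ → ℝ) (s : Set ℝ) : Prop where
  convex : Convex ℝ s
  contDiff : ContDiff ℝ 3 F
  deriv_pos : ∀ x ∈ s, 0 < deriv F x
  schwarzian_nonpos : ∀ x ∈ s, schwarzianDeriv F x ≤ 0

/-- The function `(F')^(-1/2)`, which is convex exactly where the Schwarzian derivative of `F` is
nonpositive. -/
def rsqrtDeriv (F : ℝ → ℝ) (x : ℝ) : ℝ := (√(deriv F x))⁻¹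

section SchwarzianNonpos

variable {F : ℝ → ℝ} {x : ℝ}

theorem rsqrtDeriv_pos (hx : 0 < deriv F x) : 0 < rsqrtDeriv F x :=
  inv_pos.2 (Real.sqrt_pos.2 hx)

theorem inv_sq_rsqrtDeriv (hx : 0 < deriv F x) : (rsqrtDeriv F x ^ 2)⁻¹ = deriv F x := by
  rw [rsqrtDeriv, inv_pow, Real.sq_sqrt hx.le, inv_inv]

theorem hasDerivAt_of_contDiff (hF : ContDiff ℝ 3 F) (x : ℝ) : HasDerivAt F (deriv F x) x :=
  (hF.differentiable (by norm_num) x).hasDerivAt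

theorem hasDerivAt_deriv_of_contDiff (hF : ContDiff ℝ 3 F) (x : ℝ) :
    HasDerivAt (deriv F) (deriv (deriv F) x) x := by
  have hF' := hF.iterate_deriv' 2 1
  exact (hF'.differentiable (by norm_num) x).hasDerivAt

theorem hasDerivAt_deriv_deriv_of_contDiff (hF : ContDiff ℝ 3 F) (x : ℝ) :
    HasDerivAt (deriv (deriv F)) (deriv (deriv (deriv F)) x) x := by
  have hF'' := hF.iterate_deriv' 1 2
  exact (hF''.differentiable (by norm_num) x).hasDerivAt

theorem hasDerivAt_rsqrtDeriv (hF : ContDiff ℝ 3 F) (hx : 0 < deriv F x) :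
    HasDerivAt (rsqrtDeriv F) (-(deriv (deriv F) x) / 2 * rsqrtDeriv F x ^ 3) x := by
  have hsqrt := (Real.sqrt_pos.2 hx).ne'
  refine (((hasDerivAt_deriv_of_contDiff hF x).sqrt hx.ne').inv hsqrt).congr_deriv ?_
  rw [rsqrtDeriv]
  field_simp

theorem schwarzianDeriv_eq (hF : ContDiff ℝ 3 F) (hx : deriv F x ≠ 0) :
    schwarzianDeriv F x = deriv (deriv (deriv F)) x / deriv F x -
      3 / 2 * (deriv (deriv F) x / deriv F x) ^ 2 := by
  have hquot := ((hasDerivAt_deriv_deriv_of_contDiff hF x).fun_div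
    (hasDerivAt_deriv_of_contDiff hF x) hx).deriv
  rw [schwarzianDeriv, hquot]
  field_simp
  ring

theorem hasDerivAt_deriv_rsqrtDeriv (hF : ContDiff ℝ 3 F) (hx : 0 < deriv F x) :
    HasDerivAt (fun y => -(deriv (deriv F) y) / 2 * rsqrtDeriv F y ^ 3)
      (-(1 / 2) * rsqrtDeriv F x * schwarzianDeriv F x) x := by
  have hprod := ((hasDerivAt_deriv_deriv_of_contDiff hF x).fun_neg.div_const 2).fun_mul
    ((hasDerivAt_rsqrtDeriv hF hx).fun_pow 3)
  refine hprod.congr_deriv ?_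
  have hpos := (rsqrtDeriv_pos hx).ne'
  rw [schwarzianDeriv_eq hF hx.ne', ← inv_sq_rsqrtDeriv hx]
  field_simp
  push_cast
  ring

end SchwarzianNonpos

namespace SchwarzianNonposOn

variable {F : ℝ → ℝ} {s : Set ℝ} {x y : ℝ}

theorem convexOn_rsqrtDeriv (h : SchwarzianNonposOn F s) : ConvexOn ℝ s (rsqrtDeriv F) := by
  refine convexOn_of_hasDerivWithinAt2_nonneg h.convex
    (fun x hx => (hasDerivAt_rsqrtDeriv h.contDiff (h.deriv_pos x hx)).continuousAt
      |>.continuousWithinAt)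
    (fun x hx => (hasDerivAt_rsqrtDeriv h.contDiff (h.deriv_pos x (interior_subset hx)))
      |>.hasDerivWithinAt)
    (fun x hx => (hasDerivAt_deriv_rsqrtDeriv h.contDiff (h.deriv_pos x (interior_subset hx)))
      |>.hasDerivWithinAt)
    (fun x hx => ?_)
  have hpos := rsqrtDeriv_pos (h.deriv_pos x (interior_subset hx))
  have hS := h.schwarzian_nonpos x (interior_subset hx)
  nlinarith

theorem Icc_subset (h : SchwarzianNonposOn F s) (hx : x ∈ s) (hy : y ∈ s) : Icc x y ⊆ s :=
  h.convex.ordConnected.out hx hy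

theorem div_rsqrtDeriv_mul_le (h : SchwarzianNonposOn F s) (hx : x ∈ s) (hy : y ∈ s)
    (hxy : x ≤ y) : (y - x) / (rsqrtDeriv F x * rsqrtDeriv F y) ≤ F y - F x := by
  set g := rsqrtDeriv F with hg
  have hgx : 0 < g x := rsqrtDeriv_pos (h.deriv_pos x hx)
  have hderiv : ∀ z ∈ Icc x y, HasDerivAt (fun z => F z - (z - x) / (g x * g z))
      (deriv F z - (1 * (g x * g z) - (z - x) * (g x * (-(deriv (deriv F) z) / 2 * g z ^ 3))) /
        (g x * g z) ^ 2) z := fun z hz => by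
    have hz' := h.deriv_pos z (h.Icc_subset hx hy hz)
    exact (hasDerivAt_of_contDiff h.contDiff z).sub (((hasDerivAt_id z).sub_const x).fun_div
      ((hasDerivAt_rsqrtDeriv h.contDiff hz').const_mul _)
      (mul_pos hgx (rsqrtDeriv_pos hz')).ne')
  have hmono : MonotoneOn (fun z => F z - (z - x) / (g x * g z)) (Icc x y) := by
    refine monotoneOn_of_hasDerivWithinAt_nonneg (convex_Icc x y)
      (fun z hz => (hderiv z hz).continuousAt.continuousWithinAt)
      (fun z hz => (hderiv z (interior_subset hz)).hasDerivWithinAt) (fun z hz => ?_)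
    rw [interior_Icc] at hz
    have hzs := h.Icc_subset hx hy (Ioo_subset_Icc_self hz)
    have hz' := h.deriv_pos z hzs
    have hgz : 0 < g z := rsqrtDeriv_pos hz'
    have htangent := h.convexOn_rsqrtDeriv.slope_le_of_hasDerivAt hx hzs hz.1
      (hasDerivAt_rsqrtDeriv h.contDiff hz')
    rw [slope_def_field, div_le_iff₀ (sub_pos.2 hz.1), ← hg] at htangent
    rw [← inv_sq_rsqrtDeriv hz', ← hg]
    have hfactor : (g z ^ 2)⁻¹ - (1 * (g x * g z) - (z - x) *
        (g x * (-(deriv (deriv F) z) / 2 * g z ^ 3))) / (g x * g z) ^ 2 =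
        (-(deriv (deriv F) z) / 2 * g z ^ 3 * (z - x) - (g z - g x)) / (g x * g z ^ 2) := by
      field_simp
      ring
    rw [hfactor]
    exact div_nonneg (sub_nonneg.2 htangent) (by positivity)
  have hend := hmono (left_mem_Icc.2 hxy) (right_mem_Icc.2 hxy) hxy
  simp only [sub_self, zero_div, sub_zero] at hend
  linarith

theorem deriv_mul_deriv_mul_sq_le (h : SchwarzianNonposOn F s) (hx : x ∈ s) (hy : y ∈ s)
    (hxy : x ≤ y) : deriv F x * deriv F y * (y - x) ^ 2 ≤ (F y - F x) ^ 2 := by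
  have hgx := rsqrtDeriv_pos (h.deriv_pos x hx)
  have hgy := rsqrtDeriv_pos (h.deriv_pos y hy)
  calc deriv F x * deriv F y * (y - x) ^ 2
      = ((y - x) / (rsqrtDeriv F x * rsqrtDeriv F y)) ^ 2 := by
        rw [← inv_sq_rsqrtDeriv (h.deriv_pos x hx), ← inv_sq_rsqrtDeriv (h.deriv_pos y hy)]
        field_simp
    _ ≤ (F y - F x) ^ 2 := pow_le_pow_left₀
        (div_nonneg (sub_nonneg.2 hxy) (by positivity)) (h.div_rsqrtDeriv_mul_le hx hy hxy) 2

theorem strictMonoOn (h : SchwarzianNonposOn F s) : StrictMonoOn F s :=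
  strictMonoOn_of_deriv_pos h.convex h.contDiff.continuous.continuousOn
    fun x hx => h.deriv_pos x (interior_subset hx)

theorem antitoneOn_div_sub_sub_inv (h : SchwarzianNonposOn F s) (hx : x ∈ s) (hy : y ∈ s)
    {v : ℝ} (hv : v < y) :
    AntitoneOn (fun z => deriv F y / (F y - F z) - 1 / (y - z)) (Icc x v) := by
  have hsub : ∀ z ∈ Icc x v, z ∈ s := fun z hz =>
    h.Icc_subset hx hy ⟨hz.1, hz.2.trans hv.le⟩
  have hF : ∀ z ∈ Icc x v, 0 < F y - F z := fun z hz =>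
    sub_pos.2 (h.strictMonoOn (hsub z hz) hy (hz.2.trans_lt hv))
  have hz' : ∀ z ∈ Icc x v, 0 < y - z := fun z hz => sub_pos.2 (hz.2.trans_lt hv)
  have hderiv : ∀ z ∈ Icc x v, HasDerivAt (fun z => deriv F y / (F y - F z) - 1 / (y - z))
      ((0 * (F y - F z) - deriv F y * (-deriv F z)) / (F y - F z) ^ 2 -
        (0 * (y - z) - 1 * (-1)) / (y - z) ^ 2) z := fun z hz =>
    ((hasDerivAt_const z _).fun_div ((hasDerivAt_of_contDiff h.contDiff z).const_sub _)
      (hF z hz).ne').sub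
    ((hasDerivAt_const z _).fun_div ((hasDerivAt_id z).const_sub _) (hz' z hz).ne')
  refine antitoneOn_of_hasDerivWithinAt_nonpos (convex_Icc x v)
    (fun z hz => (hderiv z hz).continuousAt.continuousWithinAt)
    (fun z hz => (hderiv z (interior_subset hz)).hasDerivWithinAt) (fun z hz => ?_)
  have hz := interior_subset hz
  have hpos := hz' z hz
  have hFpos := hF z hz
  rw [sub_nonpos, div_le_div_iff₀ (by positivity) (by positivity)]
  linarith [h.deriv_mul_deriv_mul_sq_le (hsub z hz) hy (sub_pos.1 hpos).le]

theorem monotoneOn_log_ratio (h : SchwarzianNonposOn F s) {u v w t : ℝ} (hu : u ∈ s) (ht : t ∈ s)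
    (huv : u < v) (hvw : v < w) :
    MonotoneOn (fun z => Real.log (F z - F u) - Real.log (F z - F v) +
      (Real.log (z - v) - Real.log (z - u))) (Icc w t) := by
  have hsub : ∀ z ∈ Icc w t, z ∈ s := fun z hz => h.Icc_subset hu ht ⟨by linarith [hz.1], hz.2⟩
  have hderiv : ∀ z ∈ Icc w t, HasDerivAt (fun z => Real.log (F z - F u) - Real.log (F z - F v) +
      (Real.log (z - v) - Real.log (z - u)))
      (deriv F z / (F z - F u) - deriv F z / (F z - F v) + (1 / (z - v) - 1 / (z - u))) z := by
    intro z hz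
    have hvz : v < z := hvw.trans_le hz.1
    have hFu := h.strictMonoOn hu (hsub z hz) (huv.trans hvz)
    have hFv := h.strictMonoOn (h.Icc_subset hu (hsub z hz) ⟨huv.le, hvz.le⟩) (hsub z hz) hvz
    have hF := hasDerivAt_of_contDiff h.contDiff z
    exact (((hF.sub_const _).log (sub_pos.2 hFu).ne').sub
      ((hF.sub_const _).log (sub_pos.2 hFv).ne')).add
      ((((hasDerivAt_id z).sub_const _).log (sub_pos.2 hvz).ne').sub
        (((hasDerivAt_id z).sub_const _).log (sub_pos.2 (huv.trans hvz)).ne'))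
  refine monotoneOn_of_hasDerivWithinAt_nonneg (convex_Icc w t)
    (fun z hz => (hderiv z hz).continuousAt.continuousWithinAt)
    (fun z hz => (hderiv z (interior_subset hz)).hasDerivWithinAt) (fun z hz => ?_)
  have hz := interior_subset hz
  have hanti := h.antitoneOn_div_sub_sub_inv hu (hsub z hz) (hvw.trans_le hz.1)
    (left_mem_Icc.2 huv.le) (right_mem_Icc.2 huv.le) huv.le
  simp only at hanti
  linarith

theorem crossRatio_le (h : SchwarzianNonposOn F s) {u v w t : ℝ} (hu : u ∈ s) (ht : t ∈ s)
    (huv : u < v) (hvw : v < w) (hwt : w < t) :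
    crossRatio (F u) (F v) (F w) (F t) ≤ crossRatio u v w t := by
  have hv : v ∈ s := h.Icc_subset hu ht ⟨huv.le, (hvw.trans hwt).le⟩
  have hw : w ∈ s := h.Icc_subset hu ht ⟨(huv.trans hvw).le, hwt.le⟩
  have hFuv := h.strictMonoOn hu hv huv
  have hFvw := h.strictMonoOn hv hw hvw
  have hFwt := h.strictMonoOn hw ht hwt
  have hlog := h.monotoneOn_log_ratio hu ht huv hvw (left_mem_Icc.2 hwt.le)
    (right_mem_Icc.2 hwt.le) hwt.le
  simp only at hlog
  have hFwu := sub_pos.2 (hFuv.trans hFvw)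
  have hFwv := sub_pos.2 hFvw
  have hFtu := sub_pos.2 ((hFuv.trans hFvw).trans hFwt)
  have hFtv := sub_pos.2 (hFvw.trans hFwt)
  have hwu := sub_pos.2 (huv.trans hvw)
  have hwv := sub_pos.2 hvw
  have htu := sub_pos.2 ((huv.trans hvw).trans hwt)
  have htv := sub_pos.2 (hvw.trans hwt)
  have hprod : (F w - F u) * (F t - F v) * ((w - v) * (t - u)) ≤
      (F t - F u) * (F w - F v) * ((t - v) * (w - u)) := by
    rw [← Real.log_le_log_iff (by positivity) (by positivity),
      Real.log_mul (by positivity) (by positivity), Real.log_mul hFwu.ne' hFtv.ne',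
      Real.log_mul hwv.ne' htu.ne', Real.log_mul (by positivity) (by positivity),
      Real.log_mul hFtu.ne' hFwv.ne', Real.log_mul htv.ne' hwu.ne']
    linarith
  rw [crossRatio, crossRatio, div_le_div_iff₀ (by positivity) (by positivity)]
  linarith

end SchwarzianNonposOn

/-! ### Cross-ratio distortion and power laws -/

/-- The derivative of `F` on `[a, b]` exceeds the mean value `(F b - F a) / (b - a)` of the
derivative at most by the factor `C`. Where `F` has critical points this one-sided bound is all that
remains of bounded distortion. -/
def DerivLeSlope (F : ℝ → ℝ) (C a b : ℝ) : Prop := ∀ x ∈ Icc a b, deriv F x ≤ C * slope F a b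

section DerivLeSlope

variable {F : ℝ → ℝ} {C C' a b : ℝ}

theorem DerivLeSlope.mono (h : DerivLeSlope F C a b) (hF : Monotone F) (hC : C ≤ C') :
    DerivLeSlope F C' a b := fun x hx =>
  (h x hx).trans (mul_le_mul_of_nonneg_right hC
    ((hF.monotoneOn univ).slope_nonneg (mem_univ a) (mem_univ b)))

theorem DerivLeSlope.sub_div_sub_le (h : DerivLeSlope F C a b) (hF : Differentiable ℝ F)
    (hmono : StrictMono F) (hab : a < b) {x y : ℝ} (hax : a ≤ x) (hxy : x ≤ y) (hyb : y ≤ b) :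
    (F y - F x) / (F b - F a) ≤ C * ((y - x) / (b - a)) := by
  rw [div_le_iff₀ (sub_pos.2 (hmono hab))]
  refine ((convex_Icc a b).image_sub_le_mul_sub_of_deriv_le hF.continuous.continuousOn
    hF.differentiableOn (fun z hz => h z (interior_subset hz)) x ⟨hax, hxy.trans hyb⟩ y
    ⟨hax.trans hxy, hyb⟩ hxy).trans_eq ?_
  rw [slope_def_field]
  ring

theorem crossRatio_le_of_derivLeSlope (hF : Differentiable ℝ F) (hmono : StrictMono F)
    {u v w t : ℝ} (huv : u < v) (hvw : v < w) (hwt : w < t) (hleft : DerivLeSlope F C u w)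
    (hright : DerivLeSlope F C v t) :
    crossRatio (F u) (F v) (F w) (F t) ≤ C ^ 2 * crossRatio u v w t := by
  have hle₁ := hleft.sub_div_sub_le hF hmono (huv.trans hvw) le_rfl huv.le hvw.le
  have hle₂ := hright.sub_div_sub_le hF hmono (hvw.trans hwt) hvw.le hwt.le le_rfl
  have hnonneg₁ : 0 ≤ (F v - F u) / (F w - F u) :=
    div_nonneg (sub_nonneg.2 (hmono huv).le) (sub_nonneg.2 (hmono (huv.trans hvw)).le)
  have hnonneg₂ : 0 ≤ (F t - F w) / (F t - F v) :=
    div_nonneg (sub_nonneg.2 (hmono hwt).le) (sub_nonneg.2 (hmono (hvw.trans hwt)).le)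
  calc crossRatio (F u) (F v) (F w) (F t)
      = (F v - F u) / (F w - F u) * ((F t - F w) / (F t - F v)) := mul_div_mul_comm ..
    _ ≤ C * ((v - u) / (w - u)) * (C * ((t - w) / (t - v))) :=
        mul_le_mul hle₁ hle₂ hnonneg₂ (hnonneg₁.trans hle₁)
    _ = C ^ 2 * crossRatio u v w t := by
        rw [crossRatio, mul_div_mul_comm]
        ring

theorem derivLeSlope_of_lipschitzOnWith_log_deriv {L : NNReal} (hF : Differentiable ℝ F)
    (hab : a < b) (hpos : ∀ x ∈ Icc a b, 0 < deriv F x)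
    (hL : LipschitzOnWith L (fun x => Real.log (deriv F x)) (Icc a b)) :
    DerivLeSlope F (Real.exp (L * (b - a))) a b := by
  intro x hx
  obtain ⟨y, hy, hslope⟩ := exists_deriv_eq_slope' F hab hF.continuous.continuousOn
    hF.differentiableOn
  have hy := Ioo_subset_Icc_self hy
  have hlog : Real.log (deriv F x) - Real.log (deriv F y) ≤ L * (b - a) := by
    have hxy : |x - y| ≤ b - a := abs_le.2 ⟨by linarith [hx.1, hy.2], by linarith [hx.2, hy.1]⟩
    exact (le_abs_self _).trans ((hL.dist_le_mul x hx y hy).trans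
      (mul_le_mul_of_nonneg_left hxy L.coe_nonneg))
  rw [← hslope, ← Real.exp_log (hpos x hx)]
  conv_rhs => rw [← Real.exp_log (hpos y hy), ← Real.exp_add]
  exact Real.exp_le_exp.2 (sub_le_iff_le_add.1 hlog)

/- At least one of the two outer quarters of `[a, b]` stays away from `c`; `y` is a mean value point
of the derivative on that quarter. -/
theorem exists_deriv_le_slope_and_abs_sub_le (hF : Differentiable ℝ F) (hmono : Monotone F)
    (hab : a < b) (c : ℝ) :
    ∃ y ∈ Icc a b, deriv F y ≤ 4 * slope F a b ∧ ∀ x ∈ Icc a b, |x - c| ≤ 2 * |y - c| := by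
  obtain ⟨a', b', ha, hab', hb, hlen, hfar⟩ : ∃ a' b', a ≤ a' ∧ a' < b' ∧ b' ≤ b ∧
      b - a = 4 * (b' - a') ∧ ∀ y ∈ Ioo a' b', ∀ x ∈ Icc a b, |x - c| ≤ 2 * |y - c| := by
    rcases le_total (c - a) (b - c) with hc | hc
    · refine ⟨b - (b - a) / 4, b, by linarith, by linarith, le_rfl, by ring,
        fun y hy x hx => abs_le.2 ?_⟩
      have := le_abs_self (y - c)
      constructor <;> linarith [hx.1, hx.2, hy.1, hy.2]
    · refine ⟨a, a + (b - a) / 4, le_rfl, by linarith, by linarith, by ring,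
        fun y hy x hx => abs_le.2 ?_⟩
      have := neg_le_abs (y - c)
      constructor <;> linarith [hx.1, hx.2, hy.1, hy.2]
  obtain ⟨y, hy, hslope⟩ := exists_deriv_eq_slope' F hab' hF.continuous.continuousOn
    hF.differentiableOn
  refine ⟨y, ⟨ha.trans hy.1.le, hy.2.le.trans hb⟩, ?_, hfar y hy⟩
  have hlen' := sub_pos.2 hab'
  rw [hslope, slope_def_field, slope_def_field, hlen, mul_comm 4 (b' - a'), ← div_div,
    mul_div_cancel₀ _ (four_ne_zero' ℝ)]
  exact div_le_div_of_nonneg_right (sub_le_sub (hmono hb) (hmono ha)) hlen'.le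

end DerivLeSlope

section PowerLaw

variable {F : ℝ → ℝ} {a b c σ al be : ℝ}

theorem derivLeSlope_of_powerLaw (hF : Differentiable ℝ F) (hmono : Monotone F) (hab : a < b)
    (hσ : 0 ≤ σ) (hal : 0 < al) (hbe : 0 ≤ be)
    (hpow : ∀ x ∈ Icc a b, al * |x - c| ^ σ ≤ deriv F x ∧ deriv F x ≤ be * |x - c| ^ σ) :
    DerivLeSlope F (4 * be * 2 ^ σ / al) a b := by
  intro x hx
  obtain ⟨y, hy, hslope, hfar⟩ := exists_deriv_le_slope_and_abs_sub_le hF hmono hab c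
  calc deriv F x ≤ be * |x - c| ^ σ := (hpow x hx).2
    _ ≤ be * (2 * |y - c|) ^ σ := by
        gcongr
        exact hfar x hx
    _ = be * 2 ^ σ / al * (al * |y - c| ^ σ) := by
        rw [Real.mul_rpow two_pos.le (abs_nonneg _)]
        field_simp
    _ ≤ be * 2 ^ σ / al * (4 * slope F a b) := by
        exact mul_le_mul_of_nonneg_left ((hpow y hy).1.trans hslope) (by positivity)
    _ = 4 * be * 2 ^ σ / al * slope F a b := by ring

theorem mul_rpow_le_slope_of_powerLaw (hF : Differentiable ℝ F) (hmono : Monotone F) (hab : a < b)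
    (hσ : 0 ≤ σ) (hal : 0 ≤ al) (hpow : ∀ x ∈ Icc a b, al * |x - c| ^ σ ≤ deriv F x) :
    al / (4 * 4 ^ σ) * (b - a) ^ σ ≤ slope F a b := by
  obtain ⟨y, hy, hslope, hfar⟩ := exists_deriv_le_slope_and_abs_sub_le hF hmono hab c
  have hlen : b - a ≤ 4 * |y - c| := by
    have ha := neg_le_of_abs_le (hfar a (left_mem_Icc.2 hab.le))
    have hb := le_of_abs_le (hfar b (right_mem_Icc.2 hab.le))
    linarith
  calc al / (4 * 4 ^ σ) * (b - a) ^ σ ≤ al / (4 * 4 ^ σ) * (4 * |y - c|) ^ σ := by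
        have := sub_nonneg.2 hab.le
        gcongr
    _ = al * |y - c| ^ σ / 4 := by
        rw [Real.mul_rpow four_pos.le (abs_nonneg _)]
        field_simp
    _ ≤ slope F a b := by linarith [hpow y hy]

theorem slope_le_mul_rpow_of_powerLaw (hF : Differentiable ℝ F) (hab : a < b) (hσ : 0 ≤ σ)
    (hbe : 0 ≤ be) (hc : c ∈ Icc a b) (hpow : ∀ x ∈ Icc a b, deriv F x ≤ be * |x - c| ^ σ) :
    slope F a b ≤ be * (b - a) ^ σ := by
  obtain ⟨y, hy, hslope⟩ := exists_deriv_eq_slope' F hab hF.continuous.continuousOn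
    hF.differentiableOn
  rw [← hslope]
  refine (hpow y (Ioo_subset_Icc_self hy)).trans ?_
  gcongr
  exact abs_le.2 ⟨by linarith [hy.1, hc.2], by linarith [hy.2, hc.1]⟩

end PowerLaw

section Distortion

open Classical in
/-- The map `F` increases the cross-ratios of the points of `[u, t]` with outer points `u` and `t`
at most by the factor which the field `crossRatio_le` of `CriticalLift` allows. -/
def CrossRatioDistortionLE (F : ℝ → ℝ) (crit : Finset ℝ) (C u t : ℝ) : Prop :=
  ∀ v w, u < v → v < w → w < t → crossRatio (F u) (F v) (F w) (F t) ≤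
    Real.exp (C * ((t - u) + if MeetsCrit crit u t then 1 else 0)) * crossRatio u v w t

variable {F : ℝ → ℝ} {crit : Finset ℝ} {C C' K u t : ℝ}

open Classical in
theorem CrossRatioDistortionLE.of_le
    (hK : K ≤ Real.exp (C * ((t - u) + if MeetsCrit crit u t then 1 else 0)))
    (h : ∀ v w, u < v → v < w → w < t →
      crossRatio (F u) (F v) (F w) (F t) ≤ K * crossRatio u v w t) :
    CrossRatioDistortionLE F crit C u t := fun v w huv hvw hwt =>
  (h v w huv hvw hwt).trans
    (mul_le_mul_of_nonneg_right hK (crossRatio_pos huv hvw hwt).le)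

open Classical in
theorem sub_add_ite_meetsCrit_nonneg (hut : u ≤ t) :
    0 ≤ (t - u) + if MeetsCrit crit u t then (1 : ℝ) else 0 :=
  add_nonneg (sub_nonneg.2 hut) (ite_nonneg zero_le_one le_rfl)

theorem CrossRatioDistortionLE.mono (h : CrossRatioDistortionLE F crit C u t) (hut : u ≤ t)
    (hC : C ≤ C') : CrossRatioDistortionLE F crit C' u t :=
  .of_le (Real.exp_le_exp.2 (mul_le_mul_of_nonneg_right hC (sub_add_ite_meetsCrit_nonneg hut))) h

open Classical in
theorem crossRatioDistortionLE_of_derivLeSlope (hF : Differentiable ℝ F) (hmono : StrictMono F)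
    (hK : K ^ 2 ≤ Real.exp (C * ((t - u) + if MeetsCrit crit u t then 1 else 0)))
    (h : ∀ a b, u ≤ a → a < b → b ≤ t → DerivLeSlope F K a b) :
    CrossRatioDistortionLE F crit C u t :=
  .of_le hK fun v w huv hvw hwt => crossRatio_le_of_derivLeSlope hF hmono huv hvw hwt
    (h u w le_rfl (huv.trans hvw) hwt.le) (h v t huv.le (hvw.trans hwt) le_rfl)

theorem meetsCrit_add_int (a : ℤ) : MeetsCrit crit (u + a) (t + a) ↔ MeetsCrit crit u t := by
  refine exists_congr fun c => and_congr_right fun _ =>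
    ⟨fun ⟨k, hk⟩ => ⟨k - a, ?_⟩, fun ⟨k, hk⟩ => ⟨k + a, ?_⟩⟩
  · push_cast
    exact ⟨by linarith [hk.1], by linarith [hk.2]⟩
  · push_cast
    exact ⟨by linarith [hk.1], by linarith [hk.2]⟩

open Classical in
theorem CrossRatioDistortionLE.add_int (h : CrossRatioDistortionLE F crit C u t)
    (hF : ∀ (x : ℝ) (a : ℤ), F (x + a) = F x + a) (a : ℤ) :
    CrossRatioDistortionLE F crit C (u + a) (t + a) := by
  intro v w huv hvw hwt
  obtain ⟨v, rfl⟩ : ∃ v', v = v' + a := ⟨v - a, (sub_add_cancel v _).symm⟩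
  obtain ⟨w, rfl⟩ : ∃ w', w = w' + a := ⟨w - a, (sub_add_cancel w _).symm⟩
  rw [add_lt_add_iff_right] at huv hvw hwt
  simpa only [hF, crossRatio_add_const, add_sub_add_right_eq_sub, meetsCrit_add_int] using
    h v w huv hvw hwt

end Distortion

theorem exists_uniform_of_locally {P : ℝ → ℝ → ℝ → Prop}
    (hmono : ∀ {C C' a b}, C ≤ C' → a < b → P C a b → P C' a b)
    (hshift : ∀ {C a b} (n : ℤ), P C a b → P C (a + n) (b + n))
    (hloc : ∀ x ∈ Ico (0 : ℝ) 1, ∃ C, ∃ U ∈ nhds x, ∀ a b, a < b → Icc a b ⊆ U → P C a b) :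
    ∃ ε > 0, ∃ C ≥ 0, ∀ a b, a < b → b - a < ε → P C a b := by
  obtain ⟨ε, hε, C, hC⟩ : ∃ ε > 0, ∃ C, ∀ a b, a ∈ Icc (0 : ℝ) 1 → a < b → b - a < ε →
      P C a b := by
    refine isCompact_Icc.induction_on
      (p := fun s : Set ℝ => ∃ ε > 0, ∃ C, ∀ a b, a ∈ s → a < b → b - a < ε → P C a b)
      ⟨1, one_pos, 0, fun a b ha => absurd ha (notMem_empty a)⟩ ?_ ?_ ?_
    · rintro s t hst ⟨ε, hε, C, h⟩
      exact ⟨ε, hε, C, fun a b ha => h a b (hst ha)⟩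
    · rintro s t ⟨ε, hε, C, h⟩ ⟨ε', hε', C', h'⟩
      refine ⟨min ε ε', lt_min hε hε', max C C', ?_⟩
      rintro a b (ha | ha) hab hlen
      · exact hmono (le_max_left _ _) hab (h a b ha hab (hlen.trans_le (min_le_left _ _)))
      · exact hmono (le_max_right _ _) hab (h' a b ha hab (hlen.trans_le (min_le_right _ _)))
    · intro x _
      obtain ⟨C, U, hU, h⟩ := hloc (Int.fract x) ⟨Int.fract_nonneg x, Int.fract_lt_one x⟩
      obtain ⟨ε, hε, hball⟩ := Metric.mem_nhds_iff.1 hU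
      refine ⟨Metric.ball x (ε / 2),
        mem_nhdsWithin_of_mem_nhds (Metric.ball_mem_nhds x (half_pos hε)),
        ε / 2, half_pos hε, C, fun a b ha hab hlen => ?_⟩
      rw [Real.ball_eq_Ioo] at ha hball
      have hP : P C (a - ⌊x⌋) (b - ⌊x⌋) := h _ _ (by linarith) fun y hy => hball (by
        rw [Int.fract]
        exact ⟨by linarith [hy.1, ha.1], by linarith [hy.2, ha.2]⟩)
      simpa only [sub_add_cancel] using hshift ⌊x⌋ hP
  refine ⟨ε, hε, max C 0, le_max_right _ _, fun a b hab hlen => hmono (le_max_left C 0) hab ?_⟩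
  have hP := hC (Int.fract a) (b - ⌊a⌋) ⟨Int.fract_nonneg a, (Int.fract_lt_one a).le⟩
    (by rw [Int.fract]; linarith) (by rw [Int.fract]; linarith)
  simpa only [Int.fract_add_floor, sub_add_cancel] using hshift ⌊a⌋ hP

/-! ### The critical lift of a multicritical circle map -/

namespace MCM

variable (f : MCM)

/-- The lift `f.F` as an element of the monoid of monotone degree one maps. -/
def lift : CircleDeg1Lift := ⟨⟨f.F, f.mono.monotone⟩, f.deg1⟩

/-- The set of representatives `c 0, …, c (N - 1)` of the critical points. -/
def crit : Finset ℝ := Finset.univ.image f.c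

theorem continuous_F : Continuous f.F := f.smooth.continuous

theorem differentiable_F : Differentiable ℝ f.F := f.smooth.differentiable (by norm_num)

theorem deriv_nonneg (x : ℝ) : 0 ≤ deriv f.F x := f.mono.monotone.deriv_nonneg

theorem map_add_int (x : ℝ) (a : ℤ) : f.F (x + a) = f.F x + a := f.lift.map_add_int x a

theorem deriv_add_int (x : ℝ) (a : ℤ) : deriv f.F (x + a) = deriv f.F x := by
  rw [← deriv_comp_add_const, funext fun y => f.map_add_int y a, deriv_add_const]

theorem continuous_deriv : Continuous (deriv f.F) := f.smooth.continuous_deriv (by norm_num)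

theorem exists_deriv_le : ∃ M, ∀ x, deriv f.F x ≤ M := by
  have hper : Function.Periodic (deriv f.F) 1 := fun x => by exact_mod_cast f.deriv_add_int x 1
  obtain ⟨M, hM⟩ := (hper.compact_of_continuous one_ne_zero f.continuous_deriv).bddAbove
  exact ⟨M, fun x => hM (mem_range_self x)⟩

theorem exists_le_sub {δ : ℝ} (hδ : 0 < δ) : ∃ η > 0, ∀ x, η ≤ f.F (x + δ) - f.F x := by
  have hper : Function.Periodic (fun x => f.F (x + δ) - f.F x) 1 := fun x => by
    simp only [add_right_comm x 1 δ, f.deg1, add_sub_add_right_eq_sub]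
  have hcont : Continuous fun x => f.F (x + δ) - f.F x :=
    (f.continuous_F.comp (continuous_add_const δ)).sub f.continuous_F
  obtain ⟨_, ⟨x₀, rfl⟩, hmin⟩ :=
    (hper.compact_of_continuous one_ne_zero hcont).exists_isLeast (range_nonempty _)
  exact ⟨_, sub_pos.2 (f.mono (lt_add_of_pos_right x₀ hδ)), fun x => hmin (mem_range_self x)⟩

theorem exists_c_eq_or_deriv_pos {x : ℝ} (hx : x ∈ Ico (0 : ℝ) 1) :
    (∃ i, f.c i = x) ∨ 0 < deriv f.F x := by
  rcases (f.deriv_nonneg x).eq_or_lt with h0 | hpos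
  · obtain ⟨i, k, rfl⟩ := f.critOnly x h0.symm
    have hc := f.c_mem i
    have hk : |(k : ℝ)| < 1 := abs_lt.2 ⟨by linarith [hx.1, hc.2], by linarith [hx.2, hc.1]⟩
    obtain rfl : k = 0 := Int.abs_lt_one_iff.1 (by exact_mod_cast hk)
    exact .inl ⟨i, by rw [Int.cast_zero, add_zero]⟩
  · exact .inr hpos

section Local

variable {f}

theorem deriv_bounds_of_mem_W {i : Fin f.N} {x : ℝ} (hx : x ∈ f.W i) :
    f.al i * |x - f.c i| ^ (f.s i - 1) ≤ deriv f.F x ∧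
      deriv f.F x ≤ f.be i * |x - f.c i| ^ (f.s i - 1) := by
  rcases eq_or_ne x (f.c i) with rfl | hne
  · simp [f.isCrit, Real.zero_rpow (sub_pos.2 (f.s_gt_one i)).ne']
  · exact (f.powerLaw i x hx hne).imp le_of_lt le_of_lt

theorem schwarzianNonposOn_of_subset_W {i : Fin f.N} {u t : ℝ} (hW : Icc u t ⊆ f.W i)
    (hc : f.c i ∉ Icc u t) : SchwarzianNonposOn f.F (Icc u t) where
  convex := convex_Icc u t
  contDiff := f.smooth
  deriv_pos _ hx := (mul_pos (f.al_pos i) (Real.rpow_pos_of_pos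
    (abs_pos.2 (sub_ne_zero.2 (ne_of_mem_of_not_mem hx hc))) _)).trans_le
    (deriv_bounds_of_mem_W (hW hx)).1
  schwarzian_nonpos x hx := (f.negSchwarzian i x (hW hx) (ne_of_mem_of_not_mem hx hc)).le

theorem be_pos (i : Fin f.N) : 0 < f.be i := (f.al_pos i).trans (f.al_lt_be i)

theorem exists_derivLeSlope_of_subset_W (i : Fin f.N) :
    ∃ C, ∀ a b, a < b → Icc a b ⊆ f.W i → DerivLeSlope f.F C a b :=
  ⟨_, fun _ _ hab hW => derivLeSlope_of_powerLaw f.differentiable_F f.mono.monotone hab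
    (sub_pos.2 (f.s_gt_one i)).le (f.al_pos i) (be_pos i).le
    fun _ hx => deriv_bounds_of_mem_W (hW hx)⟩

theorem exists_derivLeSlope_nhds_of_deriv_pos {x : ℝ} (hx : 0 < deriv f.F x) :
    ∃ L : ℝ, 0 ≤ L ∧ ∃ U ∈ nhds x, ∀ a b, a < b → Icc a b ⊆ U →
      DerivLeSlope f.F (Real.exp (L * (b - a))) a b := by
  have hlog : ContDiffAt ℝ 1 (fun y => Real.log (deriv f.F y)) x :=
    ((f.smooth.iterate_deriv' 2 1).of_le (by norm_num)).contDiffAt.log hx.ne'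
  obtain ⟨L, U, hU, hL⟩ := hlog.exists_lipschitzOnWith
  refine ⟨L, L.coe_nonneg, U ∩ {y | 0 < deriv f.F y},
    inter_mem hU (f.continuous_deriv.continuousAt.eventually (lt_mem_nhds hx)),
    fun a b hab hsub => ?_⟩
  exact derivLeSlope_of_lipschitzOnWith_log_deriv f.differentiable_F hab
    (fun y hy => (hsub hy).2) (hL.mono fun y hy => (hsub hy).1)

theorem exists_derivLeSlope_nhds {x : ℝ} (hx : x ∈ Ico (0 : ℝ) 1) :
    ∃ C, ∃ U ∈ nhds x, ∀ a b, a < b → Icc a b ⊆ U → DerivLeSlope f.F C a b := by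
  rcases f.exists_c_eq_or_deriv_pos hx with ⟨i, rfl⟩ | hpos
  · obtain ⟨C, hC⟩ := exists_derivLeSlope_of_subset_W i
    exact ⟨C, f.W i, (f.W_open i).mem_nhds (f.c_mem_W i), hC⟩
  · obtain ⟨L, hL, U, hU, h⟩ := exists_derivLeSlope_nhds_of_deriv_pos hpos
    refine ⟨Real.exp L, U ∩ Icc (x - 1 / 2) (x + 1 / 2),
      inter_mem hU (Icc_mem_nhds (by linarith) (by linarith)), fun a b hab hsub =>
        (h a b hab fun y hy => (hsub hy).1).mono f.mono.monotone (Real.exp_le_exp.2 ?_)⟩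
    have ha := (hsub (left_mem_Icc.2 hab.le)).2.1
    have hb := (hsub (right_mem_Icc.2 hab.le)).2.2
    exact mul_le_of_le_one_right hL (by linarith)

theorem exists_crossRatioDistortionLE_of_subset_W (i : Fin f.N) :
    ∃ C, ∀ u t, u < t → Icc u t ⊆ f.W i → CrossRatioDistortionLE f.F f.crit C u t := by
  obtain ⟨K, hK⟩ := exists_derivLeSlope_of_subset_W i
  refine ⟨K ^ 2, fun u t hut hW => ?_⟩
  by_cases hc : f.c i ∈ Icc u t
  · have hmeets : MeetsCrit f.crit u t :=
      ⟨f.c i, Finset.mem_image_of_mem _ (Finset.mem_univ i), 0, by simpa using hc⟩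
    refine crossRatioDistortionLE_of_derivLeSlope f.differentiable_F f.mono ?_
      fun a b ha hab hb => hK a b hab ((Icc_subset_Icc ha hb).trans hW)
    rw [if_pos hmeets]
    have := Real.add_one_le_exp (K ^ 2 * (t - u + 1))
    nlinarith [sq_nonneg K]
  · refine .of_le (Real.one_le_exp (mul_nonneg (sq_nonneg K)
      (sub_add_ite_meetsCrit_nonneg hut.le))) fun v w huv hvw hwt => ?_
    rw [one_mul]
    exact (schwarzianNonposOn_of_subset_W hW hc).crossRatio_le (left_mem_Icc.2 hut.le)
      (right_mem_Icc.2 hut.le) huv hvw hwt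

open Classical in
theorem exists_crossRatioDistortionLE_nhds {x : ℝ} (hx : x ∈ Ico (0 : ℝ) 1) :
    ∃ C, ∃ U ∈ nhds x, ∀ u t, u < t → Icc u t ⊆ U →
      CrossRatioDistortionLE f.F f.crit C u t := by
  rcases f.exists_c_eq_or_deriv_pos hx with ⟨i, rfl⟩ | hpos
  · obtain ⟨C, hC⟩ := exists_crossRatioDistortionLE_of_subset_W i
    exact ⟨C, f.W i, (f.W_open i).mem_nhds (f.c_mem_W i), hC⟩
  · obtain ⟨L, hL, U, hU, h⟩ := exists_derivLeSlope_nhds_of_deriv_pos hpos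
    refine ⟨2 * L, U, hU, fun u t _ hsub => crossRatioDistortionLE_of_derivLeSlope
      (K := Real.exp (L * (t - u))) f.differentiable_F f.mono ?_ fun a b ha hab hb => ?_⟩
    · rw [← Real.exp_nat_mul, Real.exp_le_exp, mul_add, Nat.cast_ofNat, ← mul_assoc]
      exact le_add_of_nonneg_right
        (mul_nonneg (mul_nonneg two_pos.le hL) (ite_nonneg zero_le_one le_rfl))
    · exact (h a b hab ((Icc_subset_Icc ha hb).trans hsub)).mono f.mono.monotone
        (Real.exp_le_exp.2 (mul_le_mul_of_nonneg_left (by linarith) hL))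

theorem powerLaw_of_subset_W {i : Fin f.N} {a b : ℝ} (hab : a < b) (hW : Icc a b ⊆ f.W i)
    (hc : f.c i ∈ Icc a b) :
    f.al i / (4 * 4 ^ (f.s i - 1)) * (b - a) ^ f.s i ≤ f.F b - f.F a ∧
      f.F b - f.F a ≤ f.be i * (b - a) ^ f.s i := by
  have hba := sub_pos.2 hab
  have hs := (sub_pos.2 (f.s_gt_one i)).le
  have hpow : (b - a) ^ f.s i = (b - a) ^ (f.s i - 1) * (b - a) := by
    rw [← Real.rpow_add_one hba.ne', sub_add_cancel]
  rw [hpow, ← mul_assoc, ← mul_assoc, ← le_div_iff₀ hba, ← div_le_iff₀ hba, ← slope_def_field]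
  exact ⟨mul_rpow_le_slope_of_powerLaw f.differentiable_F f.mono.monotone hab hs (f.al_pos i).le
      fun x hx => (deriv_bounds_of_mem_W (hW hx)).1,
    slope_le_mul_rpow_of_powerLaw f.differentiable_F hab hs (be_pos i).le hc
      fun x hx => (deriv_bounds_of_mem_W (hW hx)).2⟩

end Local

theorem exists_derivLeSlope (ℓ : ℝ) :
    ∃ C, ∀ a b, a < b → b - a ≤ ℓ → DerivLeSlope f.F C a b := by
  obtain ⟨ε, hε, C, -, hC⟩ := exists_uniform_of_locally (P := DerivLeSlope f.F)
    (fun hCC' _ h => h.mono f.mono.monotone hCC')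
    (fun {C a b} n h x hx => by
      have := h (x - n) ⟨by linarith [hx.1], by linarith [hx.2]⟩
      rw [← f.deriv_add_int, sub_add_cancel] at this
      rwa [slope_def_field, f.map_add_int, f.map_add_int, add_sub_add_right_eq_sub,
        add_sub_add_right_eq_sub, ← slope_def_field])
    (fun x hx => exists_derivLeSlope_nhds hx)
  obtain ⟨M, hM⟩ := f.exists_deriv_le
  obtain ⟨η, hη, hle⟩ := f.exists_le_sub hε
  refine ⟨max C (M * ℓ / η), fun a b hab hlen => ?_⟩
  rcases lt_or_ge (b - a) ε with hlt | hge
  · exact (hC a b hab hlt).mono f.mono.monotone (le_max_left _ _)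
  · refine DerivLeSlope.mono (fun x _ => ?_) f.mono.monotone (le_max_right C (M * ℓ / η))
    have hM0 : 0 ≤ M := (f.deriv_nonneg x).trans (hM x)
    have hba := sub_pos.2 hab
    calc deriv f.F x ≤ M * 1 := by simpa using hM x
      _ ≤ M * (ℓ / (b - a)) := by
        gcongr
        rwa [one_le_div hba]
      _ = M * ℓ / η * (η / (b - a)) := by field_simp
      _ ≤ M * ℓ / η * slope f.F a b := by
        rw [slope_def_field]
        have hinc : η ≤ f.F b - f.F a :=
          (hle a).trans (sub_le_sub_right (f.mono.monotone (by linarith)) _)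
        have hℓ : 0 ≤ ℓ := hba.le.trans hlen
        gcongr

open Classical in
theorem exists_crossRatioDistortionLE (ℓ : ℝ) :
    ∃ C ≥ 0, ∀ u t, u < t → t - u ≤ ℓ → CrossRatioDistortionLE f.F f.crit C u t := by
  obtain ⟨K, hK⟩ := f.exists_derivLeSlope ℓ
  obtain ⟨ε, hε, C, hC0, hC⟩ := exists_uniform_of_locally (P := CrossRatioDistortionLE f.F f.crit)
    (fun hCC' hab h => h.mono hab.le hCC') (fun n h => h.add_int f.map_add_int n)
    (fun x hx => exists_crossRatioDistortionLE_nhds hx)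
  refine ⟨max C (K ^ 2 / ε), hC0.trans (le_max_left _ _), fun u t hut hlen => ?_⟩
  rcases lt_or_ge (t - u) ε with hlt | hge
  · exact (hC u t hut hlt).mono hut.le (le_max_left _ _)
  · refine CrossRatioDistortionLE.mono ?_ hut.le (le_max_right C (K ^ 2 / ε))
    refine crossRatioDistortionLE_of_derivLeSlope (K := K) f.differentiable_F f.mono ?_
      fun a b ha hab hb => hK a b hab (by linarith)
    calc K ^ 2 = K ^ 2 / ε * ε := (div_mul_cancel₀ _ hε.ne').symm
      _ ≤ K ^ 2 / ε * ((t - u) + if MeetsCrit f.crit u t then 1 else 0) := by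
        gcongr
        exact hge.trans (le_add_of_nonneg_right (ite_nonneg zero_le_one le_rfl))
      _ ≤ _ := (le_add_of_nonneg_right zero_le_one).trans (Real.add_one_le_exp _)

theorem exists_powerLaw (i : Fin f.N) : ∃ al be : ℝ, 0 < al ∧ 0 < be ∧
    ∀ a b, a < b → b - a ≤ 1 → f.c i ∈ Icc a b →
      al * (b - a) ^ f.s i ≤ f.F b - f.F a ∧ f.F b - f.F a ≤ be * (b - a) ^ f.s i := by
  obtain ⟨ε, hε, hball⟩ := Metric.isOpen_iff.1 (f.W_open i) _ (f.c_mem_W i)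
  rw [Real.ball_eq_Ioo] at hball
  obtain ⟨η, hη, hle⟩ := f.exists_le_sub hε
  have hal := f.al_pos i
  have hs := (zero_lt_one.trans (f.s_gt_one i)).le
  refine ⟨min (f.al i / (4 * 4 ^ (f.s i - 1))) η, max (f.be i) (ε ^ f.s i)⁻¹,
    lt_min (by positivity) hη, lt_max_of_lt_left (be_pos i), fun a b hab hlen hc => ?_⟩
  have hba := sub_pos.2 hab
  have hpow := Real.rpow_pos_of_pos hba (f.s i)
  suffices h : ∃ al be, min (f.al i / (4 * 4 ^ (f.s i - 1))) η ≤ al ∧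
      be ≤ max (f.be i) (ε ^ f.s i)⁻¹ ∧ al * (b - a) ^ f.s i ≤ f.F b - f.F a ∧
      f.F b - f.F a ≤ be * (b - a) ^ f.s i by
    obtain ⟨al, be, hal, hbe, hlow, hup⟩ := h
    exact ⟨(mul_le_mul_of_nonneg_right hal hpow.le).trans hlow,
      hup.trans (mul_le_mul_of_nonneg_right hbe hpow.le)⟩
  rcases lt_or_ge (b - a) ε with hlt | hge
  · refine ⟨_, _, min_le_left _ _, le_max_left _ _, powerLaw_of_subset_W hab (fun x hx => hball
      ⟨?_, ?_⟩) hc⟩ <;> linarith [hx.1, hx.2, hc.1, hc.2]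
  · refine ⟨_, _, min_le_right _ _, le_max_right _ _, ?_, ?_⟩
    · calc η * (b - a) ^ f.s i ≤ η := mul_le_of_le_one_right hη.le
            (Real.rpow_le_one hba.le hlen hs)
        _ ≤ f.F b - f.F a := (hle a).trans (sub_le_sub_right (f.mono.monotone (by linarith)) _)
    · calc f.F b - f.F a ≤ 1 := by linarith [f.mono.monotone (show b ≤ a + 1 by linarith), f.deg1 a]
        _ ≤ (ε ^ f.s i)⁻¹ * (b - a) ^ f.s i := by
          rw [one_le_inv_mul₀ (Real.rpow_pos_of_pos hε _)]
          exact Real.rpow_le_rpow hε.le hge hs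

theorem exists_semiconj_translation {ρ : ℝ} (hrot : HasRotationNumber f.F ρ) :
    ∃ h : CircleDeg1Lift, ∀ x, h (f.F x) = h x + ρ := by
  have hbij : Function.Bijective f.lift :=
    ⟨f.mono.injective, f.lift.continuous_iff_surjective.1 f.continuous_F⟩
  obtain ⟨h, hh⟩ := CircleDeg1Lift.semiconj_of_bijective_of_translationNumber_eq hbij
    (CircleDeg1Lift.isUnit_iff_bijective.1 (CircleDeg1Lift.translate (.ofAdd ρ)).isUnit)
    ((f.lift.translationNumber_eq_of_tendsto₀ hrot).trans
      (CircleDeg1Lift.translationNumber_translate ρ).symm)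
  exact ⟨h, fun x => (hh x).trans ((CircleDeg1Lift.translate_apply ρ _).trans (add_comm _ _))⟩

theorem exists_criticalLift {ρ : ℝ} (hrot : HasRotationNumber f.F ρ) :
    ∃ S : CriticalLift, S.F = f.lift ∧ S.rho = ρ ∧ S.crit = f.crit := by
  obtain ⟨h, hh⟩ := f.exists_semiconj_translation hrot
  obtain ⟨C, hC0, hC⟩ := f.exists_crossRatioDistortionLE 4
  refine ⟨{ F := f.lift, continuous_F := f.continuous_F, strictMono_F := f.mono, h := h, rho := ρ,
            h_F := hh, crit := f.crit, distConst := C, distConst_nonneg := hC0,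
            crossRatio_le := fun u v w t huv hvw hwt hlen =>
              hC u t (huv.trans (hvw.trans hwt)) hlen v w huv hvw hwt,
            powerLaw := fun c hc => ?_ }, rfl, rfl, rfl⟩
  obtain ⟨i, -, rfl⟩ := Finset.mem_image.1 hc
  obtain ⟨al, be, hal, hbe, hpow⟩ := f.exists_powerLaw i
  refine ⟨f.s i, al, be, f.s_gt_one i, hal, hbe, fun x hx => ?_⟩
  change _ ≤ |f.F x - f.F (f.c i)| ∧ |f.F x - f.F (f.c i)| ≤ _
  rcases lt_trichotomy x (f.c i) with hlt | rfl | hgt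
  · rw [abs_sub_comm, abs_of_pos (sub_pos.2 hlt)] at hx ⊢
    rw [abs_sub_comm, abs_of_pos (sub_pos.2 (f.mono hlt))]
    exact hpow x _ hlt hx (right_mem_Icc.2 hlt.le)
  · simp [Real.zero_rpow (zero_lt_one.trans (f.s_gt_one i)).ne']
  · rw [abs_of_pos (sub_pos.2 hgt)] at hx ⊢
    rw [abs_of_pos (sub_pos.2 (f.mono hgt))]
    exact hpow _ x hgt hx (left_mem_Icc.2 hgt.le)

end MCM

/-! ### Bridges of multicritical circle maps -/

namespace MCM

variable {f : MCM}

theorem exists_deriv_eq_zero_of_deriv_iterate_eq_zero {m : ℕ} {x : ℝ}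
    (hx : deriv f.F^[m] x = 0) : ∃ k < m, deriv f.F (f.F^[k] x) = 0 := by
  have hderiv (m : ℕ) : HasDerivAt f.F^[m] (∏ k ∈ Finset.range m, deriv f.F (f.F^[k] x)) x := by
    induction m with
    | zero => simpa using hasDerivAt_id x
    | succ m ih =>
      rw [Function.iterate_succ', Finset.prod_range_succ, mul_comm]
      exact (hasDerivAt_of_contDiff f.smooth _).comp x ih
  rw [(hderiv m).deriv, Finset.prod_eq_zero_iff] at hx
  simpa only [Finset.mem_range] using hx

theorem c_mem_crit (i : Fin f.N) : f.c i ∈ f.crit :=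
  Finset.mem_image_of_mem _ (Finset.mem_univ i)

section CriticalLift

variable {S : CriticalLift} {ρ x : ℝ}

theorem atomLen_zero_eq (hF : S.F = f.lift) (n : ℕ) :
    atomLen f.F ρ x n 0 = |S.ret (qDen ρ n) (pNum ρ n) x - x| := by
  rw [S.ret_apply, hF, atomLen, zero_add, Function.iterate_zero_apply, Int.cast_natCast]
  rfl

theorem iterate_eq_ret_add (hF : S.F = f.lift) (q q' : ℕ) (p p' : ℤ) (k : ℕ) :
    f.F^[q + k * q'] x = (S.ret q' p')^[k] (S.ret q p x) + (p + k * p' : ℤ) := by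
  rw [S.ret_iterate, S.ret_ret, S.ret_apply, hF, add_comm q, add_comm p, sub_add_cancel]
  rfl

theorem iterate_eq_ret_succ_add (hF : S.F = f.lift) (q q' : ℕ) (p : ℤ) (p' k : ℕ) :
    f.F^[q + k * q' + q'] x - p' =
      (S.ret q' p')^[k + 1] (S.ret q p x) + (p + k * p' : ℤ) := by
  rw [add_assoc, ← Nat.succ_mul, iterate_eq_ret_add hF q q' p p']
  push_cast
  ring

theorem bridgeLen_eq_orbitLength (hF : S.F = f.lift) (i₀ : Fin f.N) (n i j : ℕ) :
    bridgeLen f ρ i₀ n i j = S.orbitLength (qDen ρ n) (pNum ρ n) (qDen ρ (n + 1))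
      (pNum ρ (n + 1)) (f.c i₀) i j :=
  Finset.sum_congr rfl fun k _ => by
    rw [atomLen, iterate_eq_ret_succ_add hF _ _ (pNum ρ n),
      iterate_eq_ret_add hF _ _ (pNum ρ n) (pNum ρ (n + 1)), add_sub_add_right_eq_sub]

theorem isCriticalSpot_of_critTime (hF : S.F = f.lift) (hcrit : S.crit = f.crit) {i₀ : Fin f.N}
    {n k : ℕ} (hk : CritTime f ρ i₀ n k) :
    S.IsCriticalSpot (qDen ρ (n + 1))
      ((S.ret (qDen ρ (n + 1)) (pNum ρ (n + 1)))^[k] (S.ret (qDen ρ n) (pNum ρ n) (f.c i₀)))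
      ((S.ret (qDen ρ (n + 1)) (pNum ρ (n + 1)))^[k + 1]
        (S.ret (qDen ρ n) (pNum ρ n) (f.c i₀))) := by
  obtain ⟨-, x, hx, hderiv⟩ := hk
  obtain ⟨m, hm, hmx⟩ := exists_deriv_eq_zero_of_deriv_iterate_eq_zero hderiv
  obtain ⟨j, a, hja⟩ := f.critOnly _ hmx
  rw [atomSet, iterate_eq_ret_succ_add hF _ _ (pNum ρ n),
    iterate_eq_ret_add hF _ _ (pNum ρ n) (pNum ρ (n + 1)), ← image_add_const_uIcc] at hx
  obtain ⟨w, hw, rfl⟩ := hx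
  refine ⟨w, hw, m, hm, a - (pNum ρ n + k * pNum ρ (n + 1) : ℤ), ?_⟩
  have hshift (P : ℤ) : S.ret m (a - P) w = f.F^[m] (w + P) - a := by
    rw [S.ret_apply, hF, ← CircleDeg1Lift.coe_pow, Int.cast_sub, sub_sub_eq_add_sub,
      ← CircleDeg1Lift.map_add_int, CircleDeg1Lift.coe_pow]
    rfl
  rw [hshift, hja, add_sub_cancel_right, hcrit]
  exact c_mem_crit j

end CriticalLift

end MCM

theorem bridges_are_large_general
    (f : MCM) (ρ : ℝ) (hirr : Irrational ρ) (hmem : ρ ∈ Set.Ioo (0 : ℝ) 1)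
    (hrot : HasRotationNumber f.F ρ) (i₀ : Fin f.N) :
    ∃ K : ℝ, 1 < K ∧ ∀ n i j : ℕ, (CritTime f ρ i₀ n i ∨ i = 0) → i + 1 < j →
      j ≤ cfDigit ρ (n + 1) →
      K⁻¹ * atomLen f.F ρ (f.c i₀) n 0 ≤ bridgeLen f ρ i₀ n (i + 1) j ∧
        bridgeLen f ρ i₀ n (i + 1) j ≤ K * atomLen f.F ρ (f.c i₀) n 0 := by
  obtain ⟨S, hF, rfl, hcrit⟩ := f.exists_criticalLift hrot
  obtain ⟨C, hC, hcomparable⟩ := S.exists_orbitLength_comparable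
  refine ⟨C + 1, by linarith, fun n i j hi hij hj => ?_⟩
  have hjθ : j * |convergentError S.rho (n + 1)| < |convergentError S.rho n| :=
    (mul_le_mul_of_nonneg_right (Nat.cast_le.2 hj) (abs_nonneg _)).trans_lt
      (cfDigit_mul_abs_convergentError_lt hirr hmem n)
  obtain ⟨hlower, hupper⟩ := hcomparable _ _ _ _ _ (closestReturn_qDen hirr hmem n)
    (closestReturn_qDen hirr hmem (n + 1)) (convergentError_mul_succ_neg hirr hmem n) (f.c i₀)
    (hcrit ▸ MCM.c_mem_crit i₀) i j hij hjθ
    (hi.symm.imp_right (MCM.isCriticalSpot_of_critTime hF hcrit))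
  rw [MCM.atomLen_zero_eq hF, MCM.bridgeLen_eq_orbitLength hF, inv_mul_le_iff₀ (by linarith)]
  have hgap := abs_nonneg (S.ret (qDen S.rho n) (pNum S.rho n) (f.c i₀) - f.c i₀)
  constructor <;> nlinarith

/-- **bridges are large.** Each non-empty bridge
`G_i = ⋃_{k=k_i+1}^{k_{i+1}-1} Δ_k` between consecutive critical spots inside `I_n(c₀)`
is comparable to `I_n(c₀)`, with a constant depending only on `f`. -/
theorem bridges_are_large
    (f : MCM) (ρ : ℝ) (hirr : Irrational ρ) (hmem : ρ ∈ Set.Ioo (0 : ℝ) 1)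
    (hrot : HasRotationNumber f.F ρ) (i₀ : Fin f.N) :
    ∃ K : ℝ, 1 < K ∧ ∀ n i j : ℕ, IsBridgePair f ρ i₀ n i j → i + 1 < j →
      K⁻¹ * atomLen f.F ρ (f.c i₀) n 0 ≤ bridgeLen f ρ i₀ n (i + 1) j ∧
        bridgeLen f ρ i₀ n (i + 1) j ≤ K * atomLen f.F ρ (f.c i₀) n 0 := by
  obtain ⟨K, hK, hbounds⟩ := bridges_are_large_general f ρ hirr hmem hrot i₀
  exact ⟨K, hK, fun n i j ⟨hi, _, _, hj⟩ hij =>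
    hbounds n i j hi hij (hj.elim (fun h => h.1.le) Eq.le)⟩
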